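/- arXiv:2205.00153 — 6 statements merged into one kernel-verified Lean document; each statement's English description precedes it below -/
import Mathlib

section
/- For every compact set K ⊂ ℂ∖[β₁, α] one has, as g → ∞, sup_{λ∈K} | Σ_{j=2}^{g} Log((λ − α_j^{(g)})/(λ − β_j^{(g)})) − (1/g) Σ_{j=2}^{g} w_j^{(g)} / ( ρ(β_j^{(g)}) (λ − β_j^{(g)}) ) | → 0, where for all sufficiently large g each quantity (λ − α_j^{(g)})/(λ − β_j^{(g)}) lies outside (−∞, 0] so that the principal logarithm is defined. -/
open Complex Filter MeasureTheory


/-- Uniform control of `b - a`. -/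
lemma aux_single (β₁ α : ℝ) (ρ : ℝ → ℝ) (hρc : ContinuousOn ρ (Set.Icc β₁ α))
    (m : ℝ) (hm : 0 < m) (hmρ : ∀ y ∈ Set.Icc β₁ α, m ≤ ρ y)
    (a b v : ℝ) (ha : a ∈ Set.Icc β₁ α) (hb : b ∈ Set.Icc β₁ α) (hv : 0 < v)
    (hint : (∫ y in β₁..b, ρ y) - (∫ y in β₁..a, ρ y) = v) :
    |b - a| ≤ v / m ∧ ∀ η : ℝ, (∀ y ∈ Set.Icc β₁ α, |y - b| ≤ v / m → |ρ y - ρ b| ≤ η) →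
      |(b - a) - v / ρ b| ≤ η * (v / m) / m := by
  have hle : β₁ ≤ α := ha.1.trans ha.2
  have hii : ∀ x ∈ Set.Icc β₁ α, ∀ y ∈ Set.Icc β₁ α, IntervalIntegrable ρ volume x y := by
    intro x hx y hy
    exact (hρc.mono (Set.uIcc_subset_Icc hx hy)).intervalIntegrable
  have hβ : β₁ ∈ Set.Icc β₁ α := ⟨le_rfl, hle⟩
  have hI : (∫ y in a..b, ρ y) = v := by
    rw [← hint, intervalIntegral.integral_interval_sub_left (hii _ hβ _ hb) (hii _ hβ _ ha)]
  have key : ∀ x ∈ Set.Icc β₁ α, ∀ y ∈ Set.Icc β₁ α, x ≤ y → m * (y - x) ≤ ∫ t in x..y, ρ t := by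
    intro x hx y hy hxy
    have := intervalIntegral.integral_mono_on (f := fun _ => m) (g := ρ) (μ := volume) hxy
      (by simp) (hii x hx y hy) (fun t ht => hmρ t ⟨hx.1.trans ht.1, ht.2.trans hy.2⟩)
    rw [intervalIntegral.integral_const, smul_eq_mul] at this
    linarith
  have hab : a ≤ b := by
    by_contra h
    push Not at h
    have h1 := key b hb a ha h.le
    rw [intervalIntegral.integral_symm, hI] at h1
    nlinarith
  have h1 : |b - a| ≤ v / m := by
    rw [abs_of_nonneg (by linarith), le_div_iff₀ hm]
    have := key a ha b hb hab
    rw [hI] at this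
    linarith
  refine ⟨h1, fun η hη => ?_⟩
  have hη0 : 0 ≤ η := (abs_nonneg _).trans (hη b hb (by simp; positivity))
  have h2 : |v - ρ b * (b - a)| ≤ η * |b - a| := by
    have h3 : ‖∫ y in a..b, (ρ y - ρ b)‖ ≤ η * |b - a| := by
      apply intervalIntegral.norm_integral_le_of_norm_le_const
      intro y hy
      rw [Set.uIoc_of_le hab] at hy
      apply hη y ⟨ha.1.trans hy.1.le, hy.2.trans hb.2⟩
      refine le_trans ?_ h1
      rw [abs_sub_comm, abs_of_nonneg (by linarith [hy.2]), abs_of_nonneg (by linarith)]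
      linarith [hy.1]
    rw [intervalIntegral.integral_sub (hii a ha b hb) (by simp), hI,
      intervalIntegral.integral_const, smul_eq_mul, Real.norm_eq_abs, mul_comm] at h3
    exact h3
  have hρb : m ≤ ρ b := hmρ b hb
  have hρ0 : 0 < ρ b := hm.trans_le hρb
  have h4 : (b - a) - v / ρ b = -(v - ρ b * (b - a)) / ρ b := by field_simp; ring
  rw [h4, abs_div, abs_neg, abs_of_pos hρ0]
  have h5 : η * |b - a| ≤ η * (v / m) := mul_le_mul_of_nonneg_left h1 hη0
  exact div_le_div₀ (by positivity) (h2.trans h5) hm hρb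

lemma aux_log (z : ℂ) (a b s d r e : ℝ) (hd : 0 < d) (hz : d ≤ ‖z - (b : ℂ)‖)
    (hab : |b - a| ≤ r) (hr : r / d ≤ 1 / 2) (hs : |(b - a) - s| ≤ e) :
    (z - (a : ℂ)) / (z - (b : ℂ)) ∈ Complex.slitPlane ∧
    ‖Complex.log ((z - (a : ℂ)) / (z - (b : ℂ))) - (s : ℂ) / (z - (b : ℂ))‖
      ≤ (r / d) ^ 2 + e / d := by
  have hzb : z - (b : ℂ) ≠ 0 := norm_pos_iff.1 (hd.trans_le hz)
  have hr0 : 0 ≤ r := (abs_nonneg _).trans hab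
  set u : ℂ := ((b - a : ℝ) : ℂ) / (z - (b : ℂ)) with hu
  have h1 : (z - (a : ℂ)) / (z - (b : ℂ)) = 1 + u := by
    rw [hu]; field_simp; push_cast; ring
  have hun : ‖u‖ ≤ r / d := by
    rw [hu, norm_div, Complex.norm_real, Real.norm_eq_abs]
    exact div_le_div₀ hr0 hab hd hz
  have hu1 : ‖u‖ < 1 := by linarith
  rw [h1]
  refine ⟨Complex.mem_slitPlane_of_norm_lt_one hu1, ?_⟩
  have h2 := Complex.norm_log_one_add_sub_self_le hu1
  have h3 : (1 - ‖u‖)⁻¹ ≤ 2 := by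
    rw [inv_le_comm₀ (by linarith) (by norm_num)]; linarith
  have h4 : ‖Complex.log (1 + u) - u‖ ≤ (r / d) ^ 2 := by
    have : ‖u‖ ^ 2 ≤ (r / d) ^ 2 := by gcongr
    nlinarith [sq_nonneg ‖u‖]
  have h5 : ‖u - (s : ℂ) / (z - (b : ℂ))‖ ≤ e / d := by
    rw [hu, ← sub_div, ← Complex.ofReal_sub, norm_div, Complex.norm_real, Real.norm_eq_abs]
    exact div_le_div₀ ((abs_nonneg _).trans hs) hs hd hz
  calc _ = ‖(Complex.log (1 + u) - u) + (u - (s : ℂ) / (z - (b : ℂ)))‖ := by congr 1; ring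
    _ ≤ _ := (norm_add_le _ _).trans (add_le_add h4 h5)

/-- Fix `0 < β₁ < α` and a continuous positive density `ρ` on `[β₁, α]` with
total integral 1, and let `σ t = ∫_{β₁}^t ρ`.  For each `g ≥ 2` let `w g j ∈ (0,1)` and let
`a g j, b g j ∈ [β₁, α]` satisfy `σ (a g j) = (j-1)/g` and `σ (b g j) = (j-1+w g j)/g`
for `j = 2, …, g`.  Then for every compact `K ⊆ ℂ ∖ [β₁, α]`: for all sufficiently large `g`
each quantity `(z - a g j)/(z - b g j)` lies in the slit plane (off `(-∞,0]`), and
`∑_{j=2}^g Log((z - a g j)/(z - b g j)) - (1/g) ∑_{j=2}^g (w g j)/(ρ(b g j)(z - b g j)) → 0`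
uniformly on `K` as `g → ∞`. -/
theorem stmt_0
    (β₁ α : ℝ) (hβ₁ : 0 < β₁) (hβα : β₁ < α)
    (ρ : ℝ → ℝ) (hρc : ContinuousOn ρ (Set.Icc β₁ α))
    (hρpos : ∀ y ∈ Set.Icc β₁ α, 0 < ρ y)
    (hρint : (∫ y in β₁..α, ρ y) = 1)
    (σ : ℝ → ℝ) (hσ : ∀ t, σ t = ∫ y in β₁..t, ρ y)
    (a b w : ℕ → ℕ → ℝ)
    (hmem : ∀ g, 2 ≤ g → ∀ j ∈ Finset.Icc 2 g,
      w g j ∈ Set.Ioo (0:ℝ) 1 ∧ a g j ∈ Set.Icc β₁ α ∧ b g j ∈ Set.Icc β₁ α)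
    (hσa : ∀ g, 2 ≤ g → ∀ j ∈ Finset.Icc 2 g, σ (a g j) = ((j : ℝ) - 1) / g)
    (hσb : ∀ g, 2 ≤ g → ∀ j ∈ Finset.Icc 2 g, σ (b g j) = ((j : ℝ) - 1 + w g j) / g)
    (K : Set ℂ) (hK : IsCompact K)
    (hKΩ : K ⊆ ((fun x : ℝ => (x : ℂ)) '' Set.Icc β₁ α)ᶜ) :
    (∀ᶠ g in atTop, ∀ z ∈ K, ∀ j ∈ Finset.Icc 2 g,
      (z - (a g j : ℂ)) / (z - (b g j : ℂ)) ∈ Complex.slitPlane) ∧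
    TendstoUniformlyOn
      (fun g z =>
        (∑ j ∈ Finset.Icc 2 g, Complex.log ((z - (a g j : ℂ)) / (z - (b g j : ℂ)))) -
          (1 / (g : ℂ)) * ∑ j ∈ Finset.Icc 2 g,
            (w g j : ℂ) / ((ρ (b g j) : ℂ) * (z - (b g j : ℂ))))
      (fun _ => 0) atTop K := by
  have hne : (Set.Icc β₁ α).Nonempty := ⟨β₁, le_rfl, hβα.le⟩
  obtain ⟨y₀, hy₀, hmin⟩ := isCompact_Icc.exists_isMinOn hne hρc
  obtain ⟨m, hm, hmρ⟩ : ∃ m : ℝ, 0 < m ∧ ∀ y ∈ Set.Icc β₁ α, m ≤ ρ y :=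
    ⟨ρ y₀, hρpos y₀ hy₀, fun y hy => hmin hy⟩
  obtain ⟨d, hd, hdK⟩ : ∃ d : ℝ, 0 < d ∧ ∀ z ∈ K, ∀ x ∈ Set.Icc β₁ α, d ≤ ‖z - (x : ℂ)‖ := by
    have hS : IsCompact ((fun x : ℝ => (x : ℂ)) '' Set.Icc β₁ α) :=
      isCompact_Icc.image Complex.continuous_ofReal
    have hdisj : Disjoint K ((fun x : ℝ => (x : ℂ)) '' Set.Icc β₁ α) :=
      Set.subset_compl_iff_disjoint_right.1 hKΩ
    obtain ⟨r, hr, hlt⟩ := hdisj.exists_thickenings hK hS.isClosed |> fun ⟨δ, h0, h⟩ =>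
      (⟨δ, h0, h⟩ : ∃ δ : ℝ, 0 < δ ∧ Disjoint (Metric.thickening δ K)
        (Metric.thickening δ ((fun x : ℝ => (x : ℂ)) '' Set.Icc β₁ α)))
    refine ⟨r, hr, fun z hz x hx => ?_⟩
    by_contra hcon
    push Not at hcon
    refine Set.disjoint_left.1 hlt (Metric.self_subset_thickening hr K hz) ?_
    exact Metric.mem_thickening_iff.2 ⟨(x : ℂ), ⟨x, hx, rfl⟩, by rwa [dist_eq_norm]⟩
  have huc := Metric.uniformContinuousOn_iff.1
    (isCompact_Icc.uniformContinuousOn_of_continuous hρc)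
  have main : ∀ η : ℝ, 0 < η → ∀ᶠ g : ℕ in atTop, 2 ≤ g ∧ ∀ z ∈ K, ∀ j ∈ Finset.Icc 2 g,
      (z - (a g j : ℂ)) / (z - (b g j : ℂ)) ∈ Complex.slitPlane ∧
      ‖Complex.log ((z - (a g j : ℂ)) / (z - (b g j : ℂ))) -
        ((w g j / g / ρ (b g j) : ℝ) : ℂ) / (z - (b g j : ℂ))‖
      ≤ (1 / g / m / d) ^ 2 + η * (1 / g / m) / m / d := by
    intro η hη
    obtain ⟨δ, hδ, hδρ⟩ := huc η hη
    have ht : Tendsto (fun g : ℕ => 1 / (g : ℝ) / m) atTop (nhds 0) := by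
      simpa using (tendsto_one_div_atTop_nhds_zero_nat (𝕜 := ℝ)).div_const m
    have ht2 : Tendsto (fun g : ℕ => 1 / (g : ℝ) / m / d) atTop (nhds 0) := by
      simpa using ht.div_const d
    filter_upwards [eventually_ge_atTop 2, ht.eventually_lt_const hδ,
      ht2.eventually_lt_const (show (0 : ℝ) < 1 / 2 by norm_num)] with g hg h1 h2
    refine ⟨hg, fun z hz j hj => ?_⟩
    obtain ⟨hw, ha, hb⟩ := hmem g hg j hj
    have hg0 : (0 : ℝ) < g := by exact_mod_cast (by omega : 0 < g)
    have hv : 0 < w g j / g := div_pos hw.1 hg0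
    have hvle : w g j / g / m ≤ 1 / g / m := by
      have := hw.2.le
      gcongr
    have hint : (∫ y in β₁..b g j, ρ y) - (∫ y in β₁..a g j, ρ y) = w g j / g := by
      rw [← hσ, ← hσ, hσa g hg j hj, hσb g hg j hj]; ring
    obtain ⟨hA, hB⟩ := aux_single β₁ α ρ hρc m hm hmρ _ _ _ ha hb hv hint
    have hB' := hB η (fun y hy hyb => by
      have := hδρ y hy (b g j) hb (by rw [Real.dist_eq]; linarith)
      rw [Real.dist_eq] at this
      exact this.le)
    refine aux_log z _ _ _ d (1 / g / m) _ hd (hdK z hz _ hb) (hA.trans hvle) h2.le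
      (hB'.trans ?_)
    gcongr
  refine ⟨?_, ?_⟩
  · filter_upwards [main 1 one_pos] with g hg z hz j hj
    exact (hg.2 z hz j hj).1
  · rw [Metric.tendstoUniformlyOn_iff]
    intro ε hε
    have hη : 0 < ε / 2 * m * m * d := by positivity
    have ht : Tendsto (fun g : ℕ => 1 / (g : ℝ) * (1 / m / d) ^ 2) atTop (nhds 0) := by
      simpa using (tendsto_one_div_atTop_nhds_zero_nat (𝕜 := ℝ)).mul_const ((1 / m / d) ^ 2)
    filter_upwards [main _ hη, ht.eventually_lt_const (half_pos hε)] with g hg h1 z hz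
    have hg0 : (0 : ℝ) < g := by exact_mod_cast (by omega : 0 < g)
    rw [dist_zero_left, Finset.mul_sum, ← Finset.sum_sub_distrib]
    set B : ℝ := (1 / g / m / d) ^ 2 + ε / 2 * m * m * d * (1 / g / m) / m / d with hB
    have hB0 : 0 ≤ B := by positivity
    have h2 : ∀ j ∈ Finset.Icc 2 g,
        ‖Complex.log ((z - (a g j : ℂ)) / (z - (b g j : ℂ))) -
          1 / (g : ℂ) * ((w g j : ℂ) / ((ρ (b g j) : ℂ) * (z - (b g j : ℂ))))‖ ≤ B := by
      intro j hj
      have h3 := (hg.2 z hz j hj).2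
      have h4 : ((w g j / g / ρ (b g j) : ℝ) : ℂ) / (z - (b g j : ℂ)) =
          1 / (g : ℂ) * ((w g j : ℂ) / ((ρ (b g j) : ℂ) * (z - (b g j : ℂ)))) := by
        push_cast
        simp only [div_eq_mul_inv, mul_inv]
        ring
      rwa [h4] at h3
    refine (norm_sum_le_of_le _ h2).trans_lt ?_
    rw [Finset.sum_const, nsmul_eq_mul]
    have hcard : ((Finset.Icc 2 g).card : ℝ) ≤ g := by
      rw [Nat.card_Icc]; exact_mod_cast (by omega)
    have h5 : (g : ℝ) * B = 1 / (g : ℝ) * (1 / m / d) ^ 2 + ε / 2 := by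
      rw [hB]; field_simp
    have := mul_le_mul_of_nonneg_right hcard hB0
    linarith
end

section
/- Suppose in addition that w_j^{(g)} = v(β_j^{(g)}) for a continuous function v : [β₁, α] → (0,1) (i.e. the points β_j^{(g)} satisfy σ(β_j^{(g)}) = (j−1+v(β_j^{(g)}))/g). Then for every compact set K ⊂ ℂ∖[β₁, α], sup_{λ∈K} | Σ_{j=2}^{g} Log((λ − α_j^{(g)})/(λ − β_j^{(g)})) − ∫_{β₁}^{α} v(y)/(λ − y) dy | → 0 as g → ∞; that is, log B_g(λ) converges to ∫_{β₁}^{α} v(y)/(λ − y) dy uniformly on compact subsets of ℂ∖[β₁, α]. -/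
open Complex Filter MeasureTheory

lemma len_le (ρ : ℝ → ℝ) (x b M : ℝ) (hxb : x ≤ b) (hM : 0 ≤ M)
    (hρ : ContinuousOn ρ (Set.Icc x b))
    (hb : ∀ t ∈ Set.Icc x b, 1 ≤ M * ρ t) : b - x ≤ M * ∫ t in x..b, ρ t := by
  have hi : IntervalIntegrable ρ volume x b :=
    ContinuousOn.intervalIntegrable (by rwa [Set.uIcc_of_le hxb])
  have := intervalIntegral.integral_mono_on (μ := volume) hxb (f := fun _ => (1:ℝ))
    (g := fun t => M * ρ t) (by simp) (hi.const_mul M) hb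
  simpa using this

lemma cell (ρ v : ℝ → ℝ) (z : ℂ) (x b y h D M η : ℝ) (hxb : x ≤ b) (hby : b ≤ y)
    (hη : 0 ≤ η) (hD : 0 ≤ D) (hM : 0 ≤ M)
    (hρc : ContinuousOn ρ (Set.Icc x y)) (hvc : ContinuousOn v (Set.Icc x y))
    (hρpos : ∀ t ∈ Set.Icc x y, 0 < ρ t)
    (hρM : ∀ t ∈ Set.Icc x y, (ρ t)⁻¹ ≤ M)
    (hz : ∀ t ∈ Set.Icc x y, z - (t : ℂ) ≠ 0)
    (hzD : ∀ t ∈ Set.Icc x y, ‖(z - (t : ℂ))⁻¹‖ ≤ D)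
    (hρη : ∀ t ∈ Set.Icc x y, |ρ t - ρ b| ≤ η)
    (hFη : ∀ t ∈ Set.Icc x y,
      ‖(v t : ℂ) / (z - (t : ℂ)) / (ρ t : ℂ) - (v b : ℂ) / (z - (b : ℂ)) / (ρ b : ℂ)‖ ≤ η)
    (hh : (∫ t in x..y, ρ t) = h) (hhb : (∫ t in x..b, ρ t) = v b * h)
    (hv1 : v b ≤ 1) (hh0 : 0 ≤ h)
    (hsmall : D * (M * h) ≤ 1 / 2) :
    ‖Complex.log ((z - (x : ℂ)) / (z - (b : ℂ))) - ∫ t in x..y, (v t : ℂ) / (z - (t : ℂ))‖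
      ≤ (D * (M * h)) ^ 2 + D * M * (M * h) * η + η * h := by
  have hxy := hxb.trans hby
  have hbm : b ∈ Set.Icc x y := ⟨hxb, hby⟩
  have hsub : Set.Icc x b ⊆ Set.Icc x y := Set.Icc_subset_Icc_right hby
  have hone : ∀ t ∈ Set.Icc x y, 1 ≤ M * ρ t := fun t ht => by
    have h1 := hρM t ht
    have h2 := hρpos t ht
    calc (1:ℝ) = (ρ t)⁻¹ * ρ t := by field_simp
      _ ≤ _ := by gcongr
  have hlen : b - x ≤ M * h := by
    have h1 := len_le ρ x b M hxb hM (hρc.mono hsub) (fun t ht => hone t (hsub ht))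
    rw [hhb] at h1
    refine h1.trans ?_
    have : v b * h ≤ 1 * h := by gcongr
    rw [one_mul] at this
    gcongr
  have hlen0 : 0 ≤ b - x := by linarith
  set u : ℂ := ((b - x : ℝ) : ℂ) * (z - (b : ℂ))⁻¹ with hu
  have hun : ‖u‖ ≤ D * (M * h) := by
    rw [hu, norm_mul, Complex.norm_real, Real.norm_of_nonneg hlen0, mul_comm]
    have := hzD b hbm
    gcongr
  have hlog : ‖Complex.log ((z - (x : ℂ)) / (z - (b : ℂ))) - u‖ ≤ (D * (M * h)) ^ 2 := by
    have e : (z - (x : ℂ)) / (z - (b : ℂ)) = 1 + u := by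
      have := hz b hbm
      rw [hu]; push_cast; field_simp; ring
    rw [e]
    have h1 := Complex.norm_log_one_add_sub_self_le (z := u) (by linarith)
    refine h1.trans ?_
    have h2 : (1 - ‖u‖)⁻¹ ≤ 2 := by
      rw [inv_le_comm₀ (by linarith) (by norm_num)]; linarith
    calc ‖u‖ ^ 2 * (1 - ‖u‖)⁻¹ / 2 ≤ ‖u‖ ^ 2 * 2 / 2 := by gcongr
      _ = ‖u‖ ^ 2 := by ring
      _ ≤ _ := by gcongr
  have hρi : IntervalIntegrable ρ volume x y :=
    ContinuousOn.intervalIntegrable (by rwa [Set.uIcc_of_le hxy])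
  have hρib : IntervalIntegrable ρ volume x b :=
    ContinuousOn.intervalIntegrable (by rw [Set.uIcc_of_le hxb]; exact hρc.mono hsub)
  have hρb := hρpos b hbm
  -- second step
  have h2 : ‖u - (v b : ℂ) / (z - (b : ℂ)) / (ρ b : ℂ) * (h : ℂ)‖ ≤ D * M * (M * h) * η := by
    have e1 : (∫ t in x..b, (ρ b - ρ t)) = ρ b * (b - x) - v b * h := by
      rw [intervalIntegral.integral_sub (by simp) hρib, hhb]; simp; ring
    have e2 : ‖∫ t in x..b, (ρ b - ρ t)‖ ≤ η * |b - x| := by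
      apply intervalIntegral.norm_integral_le_of_norm_le_const
      intro t ht
      rw [Set.uIoc_of_le hxb] at ht
      rw [Real.norm_eq_abs, abs_sub_comm]
      exact hρη t (hsub ⟨ht.1.le, ht.2⟩)
    rw [e1, abs_of_nonneg hlen0] at e2
    have e3 : u - (v b : ℂ) / (z - (b : ℂ)) / (ρ b : ℂ) * (h : ℂ)
        = (z - (b : ℂ))⁻¹ * (((ρ b)⁻¹ : ℝ) : ℂ) * ((ρ b * (b - x) - v b * h : ℝ) : ℂ) := by
      have := hz b hbm
      have h3 : (ρ b : ℂ) ≠ 0 := by exact_mod_cast hρb.ne'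
      rw [hu]; push_cast; field_simp
    rw [e3, norm_mul, norm_mul, Complex.norm_real, Complex.norm_real,
      Real.norm_of_nonneg (inv_nonneg.2 hρb.le)]
    have := hzD b hbm
    have := hρM b hbm
    calc _ ≤ D * M * (η * (b - x)) := by gcongr
      _ ≤ D * M * (η * (M * h)) := by gcongr
      _ = _ := by ring
  have h3 : ‖(v b : ℂ) / (z - (b : ℂ)) / (ρ b : ℂ) * (h : ℂ)
      - ∫ t in x..y, (v t : ℂ) / (z - (t : ℂ))‖ ≤ η * h := by
    have hci : IntervalIntegrable (fun t : ℝ => (v t : ℂ) / (z - (t : ℂ))) volume x y := by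
      apply ContinuousOn.intervalIntegrable
      rw [Set.uIcc_of_le hxy]
      exact (Complex.continuous_ofReal.comp_continuousOn hvc).div (by fun_prop) hz
    have hρi' : IntervalIntegrable (fun t : ℝ => (ρ t : ℂ)) volume x y :=
      ⟨hρi.1.ofReal, hρi.2.ofReal⟩
    have e1 : (v b : ℂ) / (z - (b : ℂ)) / (ρ b : ℂ) * (h : ℂ)
      - ∫ t in x..y, (v t : ℂ) / (z - (t : ℂ)) = ∫ t in x..y,
        ((v b : ℂ) / (z - (b : ℂ)) / (ρ b : ℂ) * (ρ t : ℂ) - (v t : ℂ) / (z - (t : ℂ))) := by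
      rw [intervalIntegral.integral_sub (hρi'.const_mul _) hci,
        intervalIntegral.integral_const_mul, intervalIntegral.integral_ofReal, hh]
    rw [e1]
    have e2 : η * h = ∫ t in x..y, η * ρ t := by
      rw [intervalIntegral.integral_const_mul, hh]
    rw [e2]
    apply intervalIntegral.norm_integral_le_of_norm_le hxy _ (hρi.const_mul η)
    refine ae_of_all _ fun t ht => ?_
    have ht' : t ∈ Set.Icc x y := ⟨ht.1.le, ht.2⟩
    have hp := hρpos t ht'
    have hp' : (ρ t : ℂ) ≠ 0 := by exact_mod_cast hp.ne'
    have e4 : (v b : ℂ) / (z - (b : ℂ)) / (ρ b : ℂ) * (ρ t : ℂ) - (v t : ℂ) / (z - (t : ℂ))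
       = -((v t : ℂ) / (z - (t : ℂ)) / (ρ t : ℂ) - (v b : ℂ) / (z - (b : ℂ)) / (ρ b : ℂ))
          * (ρ t : ℂ) := by
      rw [neg_sub, sub_mul, div_mul_cancel₀ _ hp']
    rw [e4, norm_mul, norm_neg, Complex.norm_real, Real.norm_of_nonneg hp.le]
    have := hFη t ht'
    gcongr
  calc _ = ‖(Complex.log ((z - (x : ℂ)) / (z - (b : ℂ))) - u)
        + (u - (v b : ℂ) / (z - (b : ℂ)) / (ρ b : ℂ) * (h : ℂ))
        + ((v b : ℂ) / (z - (b : ℂ)) / (ρ b : ℂ) * (h : ℂ)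
          - ∫ t in x..y, (v t : ℂ) / (z - (t : ℂ)))‖ := by congr 1; ring
    _ ≤ _ := (norm_add₃_le).trans (by gcongr)

/-- With the setup of Statement 0, suppose in addition that the numbers
`w g j` are given by `w g j = v (b g j)` for a continuous `v : [β₁, α] → (0,1)` (so that
`σ (b g j) = (j-1+v(b g j))/g`).  Then for every compact `K ⊆ ℂ ∖ [β₁, α]`,
`∑_{j=2}^g Log((z - a g j)/(z - b g j))` converges to `∫_{β₁}^α v(y)/(z - y) dy`
uniformly on `K` as `g → ∞`. -/
theorem stmt_1
    (β₁ α : ℝ) (hβ₁ : 0 < β₁) (hβα : β₁ < α)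
    (ρ : ℝ → ℝ) (hρc : ContinuousOn ρ (Set.Icc β₁ α))
    (hρpos : ∀ y ∈ Set.Icc β₁ α, 0 < ρ y)
    (hρint : (∫ y in β₁..α, ρ y) = 1)
    (σ : ℝ → ℝ) (hσ : ∀ t, σ t = ∫ y in β₁..t, ρ y)
    (v : ℝ → ℝ) (hvc : ContinuousOn v (Set.Icc β₁ α))
    (hvrange : ∀ y ∈ Set.Icc β₁ α, v y ∈ Set.Ioo (0:ℝ) 1)
    (a b : ℕ → ℕ → ℝ)
    (hmem : ∀ g, 2 ≤ g → ∀ j ∈ Finset.Icc 2 g,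
      a g j ∈ Set.Icc β₁ α ∧ b g j ∈ Set.Icc β₁ α)
    (hσa : ∀ g, 2 ≤ g → ∀ j ∈ Finset.Icc 2 g, σ (a g j) = ((j : ℝ) - 1) / g)
    (hσb : ∀ g, 2 ≤ g → ∀ j ∈ Finset.Icc 2 g,
      σ (b g j) = ((j : ℝ) - 1 + v (b g j)) / g)
    (K : Set ℂ) (hK : IsCompact K)
    (hKΩ : K ⊆ ((fun x : ℝ => (x : ℂ)) '' Set.Icc β₁ α)ᶜ) :
    TendstoUniformlyOn
      (fun g z => ∑ j ∈ Finset.Icc 2 g, Complex.log ((z - (a g j : ℂ)) / (z - (b g j : ℂ))))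
      (fun z => ∫ y in β₁..α, (v y : ℂ) / (z - (y : ℂ)))
      atTop K := by
  have hle := hβα.le
  set I := Set.Icc β₁ α with hI
  have hIc : IsCompact I := isCompact_Icc
  have hz : ∀ z ∈ K, ∀ t ∈ I, z - (t : ℂ) ≠ 0 := by
    intro z hzK t ht h0
    exact hKΩ hzK ⟨t, ht, (sub_eq_zero.1 h0).symm⟩
  have hKI := hK.prod hIc
  have hinvc : ContinuousOn (fun p : ℂ × ℝ => (p.1 - (p.2 : ℂ))⁻¹) (K ×ˢ I) :=
    ContinuousOn.inv₀ (by fun_prop) (fun p hp => hz p.1 hp.1 p.2 hp.2)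
  obtain ⟨D, hD⟩ := hKI.exists_bound_of_continuousOn hinvc
  obtain ⟨M, hM⟩ := hIc.exists_bound_of_continuousOn (hρc.inv₀ fun t ht => (hρpos t ht).ne')
  have hα : α ∈ I := ⟨hle, le_rfl⟩
  have hβ : β₁ ∈ I := ⟨le_rfl, hle⟩
  have hM0 : 0 ≤ M := (norm_nonneg _).trans (hM α hα)
  rcases K.eq_empty_or_nonempty with rfl | ⟨z₀, hz₀⟩
  · exact tendstoUniformlyOn_empty
  have hD0 : 0 ≤ D := (norm_nonneg _).trans (hD (z₀, α) ⟨hz₀, hα⟩)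
  have hsnd : Set.MapsTo (Prod.snd : ℂ × ℝ → ℝ) (K ×ˢ I) I := fun p hp => hp.2
  have hFc : ContinuousOn (fun p : ℂ × ℝ => (v p.2 : ℂ) / (p.1 - (p.2 : ℂ)) / (ρ p.2 : ℂ))
      (K ×ˢ I) := by
    have h1 : ContinuousOn (fun p : ℂ × ℝ => (v p.2 : ℂ)) (K ×ˢ I) :=
      Complex.continuous_ofReal.comp_continuousOn (hvc.comp continuousOn_snd hsnd)
    have h2 : ContinuousOn (fun p : ℂ × ℝ => (ρ p.2 : ℂ)) (K ×ˢ I) :=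
      Complex.continuous_ofReal.comp_continuousOn (hρc.comp continuousOn_snd hsnd)
    refine (h1.div (by fun_prop) (fun p hp => hz p.1 hp.1 p.2 hp.2)).div h2 fun p hp => ?_
    exact_mod_cast (hρpos p.2 hp.2).ne'
  have hFu := hKI.uniformContinuousOn_of_continuous hFc
  have hρu := hIc.uniformContinuousOn_of_continuous hρc
  rw [Metric.uniformContinuousOn_iff] at hFu hρu
  have hσsub : ∀ s ∈ I, ∀ t ∈ I, (∫ y in s..t, ρ y) = σ t - σ s := by
    intro s hs t ht
    have hii : ∀ t ∈ I, IntervalIntegrable ρ volume β₁ t := fun t ht =>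
      ContinuousOn.intervalIntegrable (by
        rw [Set.uIcc_of_le ht.1]; exact hρc.mono (Set.Icc_subset_Icc_right ht.2))
    rw [hσ, hσ, intervalIntegral.integral_interval_sub_left (hii t ht) (hii s hs)]
  have hone : ∀ t ∈ I, 1 ≤ M * ρ t := fun t ht => by
    have h1 : (ρ t)⁻¹ ≤ M := (le_abs_self _).trans (hM t ht)
    have h2 := hρpos t ht
    calc (1:ℝ) = (ρ t)⁻¹ * ρ t := by field_simp
      _ ≤ _ := by gcongr
  have hlen : ∀ s ∈ I, ∀ t ∈ I, s ≤ t → t - s ≤ M * (σ t - σ s) := by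
    intro s hs t ht hst
    have hsub : Set.Icc s t ⊆ I := Set.Icc_subset_Icc hs.1 ht.2
    rw [← hσsub s hs t ht]
    exact len_le ρ s t M hst hM0 (hρc.mono hsub) fun x hx => hone x (hsub hx)
  have hmono : ∀ s ∈ I, ∀ t ∈ I, σ s ≤ σ t → s ≤ t := by
    intro s hs t ht hst
    by_contra hlt
    push Not at hlt
    have h1 := hlen t ht s hs hlt.le
    nlinarith
  rw [Metric.tendstoUniformlyOn_iff]
  intro ε hε
  set η := ε / (2 * (D * M * M + 1)) with hη
  have hηp : 0 < η := by positivity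
  obtain ⟨δ₁, hδ₁, hF⟩ := hFu η hηp
  obtain ⟨δ₂, hδ₂, hR⟩ := hρu η hηp
  have hlim : ∀ C : ℝ, Tendsto (fun g : ℕ => C * (1 / (g : ℝ))) atTop (nhds 0) := fun C => by
    simpa using (tendsto_one_div_atTop_nhds_zero_nat (𝕜 := ℝ)).const_mul C
  filter_upwards [eventually_ge_atTop 2, (hlim M).eventually_lt_const hδ₁,
    (hlim M).eventually_lt_const hδ₂,
    (hlim (D * M)).eventually_lt_const (show (0:ℝ) < 1/2 by norm_num),
    (hlim (D * M + (D * M)^2)).eventually_lt_const (show (0:ℝ) < ε / 2 by positivity)]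
    with g hg2 hg1 hg3 hg4 hg5 z hzK
  have hg0 : (0:ℝ) < g := by exact_mod_cast (by omega : 0 < g)
  set h : ℝ := 1 / (g : ℝ) with hh
  have hh0 : 0 < h := by positivity
  have hgh : (g : ℝ) * h = 1 := by rw [hh]; field_simp
  obtain ⟨n, rfl⟩ : ∃ n, g = n + 1 := ⟨g - 1, by omega⟩
  set c : ℕ → ℝ := fun k => if k = 0 then β₁ else if k ≤ n then a (n+1) (k+1) else α with hc
  have hcI : ∀ k, c k ∈ I := by
    intro k
    simp only [hc]
    split_ifs with h1 h2
    · exact hβ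
    · exact (hmem (n+1) hg2 (k+1) (Finset.mem_Icc.2 ⟨by omega, by omega⟩)).1
    · exact hα
  have hcσ : ∀ k, k ≤ n + 1 → σ (c k) = k * h := by
    intro k hk
    simp only [hc]
    split_ifs with h1 h2
    · rw [hσ, h1]; simp
    · rw [hσa (n+1) hg2 (k+1) (Finset.mem_Icc.2 ⟨by omega, by omega⟩), hh]
      push_cast; ring
    · obtain rfl : k = n + 1 := by omega
      rw [hσ, hρint, hgh]
  have hcmono : ∀ k, k < n + 1 → c k ≤ c (k+1) := by
    intro k hk
    apply hmono _ (hcI _) _ (hcI _)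
    rw [hcσ k (by omega), hcσ (k+1) (by omega)]
    push_cast; nlinarith
  have hdiff : ∀ k, k < n + 1 → σ (c (k+1)) - σ (c k) = h := by
    intro k hk
    rw [hcσ k (by omega), hcσ (k+1) (by omega)]
    push_cast; ring
  have hfc : ContinuousOn (fun t : ℝ => (v t : ℂ) / (z - (t : ℂ))) I :=
    (Complex.continuous_ofReal.comp_continuousOn hvc).div (by fun_prop) (hz z hzK)
  have hsubc : ∀ k, Set.Icc (c k) (c (k+1)) ⊆ I := fun k =>
    Set.Icc_subset_Icc (hcI k).1 (hcI (k+1)).2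
  have hint : (∫ y in β₁..α, (v y : ℂ) / (z - (y : ℂ)))
      = ∑ k ∈ Finset.range (n+1), ∫ y in c k..c (k+1), (v y : ℂ) / (z - (y : ℂ)) := by
    rw [intervalIntegral.sum_integral_adjacent_intervals]
    · simp [hc]
    · intro k hk
      apply ContinuousOn.intervalIntegrable
      rw [Set.uIcc_of_le (hcmono k hk)]
      exact hfc.mono (hsubc k)
  have hsum : (∑ j ∈ Finset.Icc 2 (n+1),
      Complex.log ((z - (a (n+1) j : ℂ)) / (z - (b (n+1) j : ℂ))))
      = ∑ k ∈ Finset.range n,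
        Complex.log ((z - (c (k+1) : ℂ)) / (z - (b (n+1) (k+2) : ℂ))) := by
    symm
    apply Finset.sum_bij (fun k _ => k + 2)
    · intro k hk; simp at hk ⊢; omega
    · intro i _ j _ hij; omega
    · intro j hj; simp at hj; exact ⟨j - 2, by simp; omega, by omega⟩
    · intro k hk
      have hk' : k + 1 ≤ n := by simp at hk; omega
      simp [hc, hk']
  rw [dist_comm, dist_eq_norm, hsum, hint, Finset.sum_range_succ', sub_add_eq_sub_sub,
    ← Finset.sum_sub_distrib]
  have hfirst : ‖∫ y in c 0..c (0+1), (v y : ℂ) / (z - (y : ℂ))‖ ≤ D * M * h := by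
    have h1 := intervalIntegral.norm_integral_le_of_norm_le_const (a := c 0) (b := c (0+1))
      (f := fun y : ℝ => (v y : ℂ) / (z - (y : ℂ))) (C := D) (by
        intro t ht
        rw [Set.uIoc_of_le (hcmono 0 (by omega))] at ht
        have ht' : t ∈ I := hsubc 0 ⟨ht.1.le, ht.2⟩
        have h2 := hD (z, t) ⟨hzK, ht'⟩
        have h3 := hvrange t ht'
        rw [div_eq_mul_inv, norm_mul, Complex.norm_real, Real.norm_of_nonneg h3.1.le]
        calc _ ≤ 1 * D := by gcongr; exact h3.2.le
          _ = D := one_mul _)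
    have h4 := hlen _ (hcI 0) _ (hcI (0+1)) (hcmono 0 (by omega))
    rw [hdiff 0 (by omega)] at h4
    rw [abs_of_nonneg (sub_nonneg.2 (hcmono 0 (by omega)))] at h1
    calc _ ≤ _ := h1
      _ ≤ D * (M * h) := by gcongr
      _ = _ := by ring
  have hcell : ∀ k ∈ Finset.range n,
      ‖Complex.log ((z - (c (k+1) : ℂ)) / (z - (b (n+1) (k+2) : ℂ)))
        - ∫ y in c (k+1)..c (k+1+1), (v y : ℂ) / (z - (y : ℂ))‖
      ≤ (D * (M * h)) ^ 2 + D * M * (M * h) * η + η * h := by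
    intro k hk
    have hkn : k < n := by simpa using hk
    have hj : k + 2 ∈ Finset.Icc 2 (n+1) := Finset.mem_Icc.2 ⟨by omega, by omega⟩
    have hbI := (hmem (n+1) hg2 _ hj).2
    have hvb := hvrange _ hbI
    have hbσ : σ (b (n+1) (k+2)) = ((k+1 : ℕ) : ℝ) * h + v (b (n+1) (k+2)) * h := by
      rw [hσb (n+1) hg2 _ hj, hh]; push_cast; ring
    have hc1 := hcσ (k+1) (by omega)
    have hc2 := hcσ (k+1+1) (by omega)
    have hxb : c (k+1) ≤ b (n+1) (k+2) := by
      apply hmono _ (hcI _) _ hbI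
      rw [hbσ, hc1]
      nlinarith [hvb.1]
    have hby : b (n+1) (k+2) ≤ c (k+1+1) := by
      apply hmono _ hbI _ (hcI _)
      rw [hbσ, hc2]
      push_cast
      nlinarith [hvb.2]
    have hclose : ∀ t ∈ Set.Icc (c (k+1)) (c (k+1+1)), |t - b (n+1) (k+2)| ≤ M * h := by
      intro t ht
      have h4 := hlen _ (hcI (k+1)) _ (hcI (k+1+1)) (hcmono (k+1) (by omega))
      rw [hdiff (k+1) (by omega)] at h4
      rw [abs_le]
      constructor <;> linarith [ht.1, ht.2]
    apply cell ρ v z _ _ _ h D M η hxb hby hηp.le hD0 hM0 (hρc.mono (hsubc _))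
      (hvc.mono (hsubc _)) (fun t ht => hρpos t (hsubc _ ht))
      (fun t ht => (le_abs_self _).trans (hM t (hsubc _ ht)))
      (fun t ht => hz z hzK t (hsubc _ ht))
      (fun t ht => hD (z, t) ⟨hzK, hsubc _ ht⟩)
    · intro t ht
      refine (hR t (hsubc _ ht) _ hbI ?_).le
      rw [Real.dist_eq]
      exact (hclose t ht).trans_lt hg3
    · intro t ht
      have := (hF (z, t) ⟨hzK, hsubc _ ht⟩ (z, b (n+1) (k+2)) ⟨hzK, hbI⟩ (by
        rw [Prod.dist_eq, dist_self, Real.dist_eq, max_eq_right (abs_nonneg _)]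
        exact (hclose t ht).trans_lt hg1)).le
      rwa [dist_eq_norm] at this
    · rw [hσsub _ (hcI _) _ (hcI _), hdiff (k+1) (by omega)]
    · rw [hσsub _ (hcI _) _ hbI, hbσ, hc1]; ring
    · exact hvb.2.le
    · exact hh0.le
    · rw [← mul_assoc]; exact hg4.le
  have hS := norm_sum_le_of_le _ hcell
  rw [Finset.sum_const, Finset.card_range, nsmul_eq_mul] at hS
  have hnh : (n : ℝ) * h ≤ 1 := by
    rw [← hgh]; gcongr; simp
  have hS2 : (n : ℝ) * ((D * (M * h)) ^ 2 + D * M * (M * h) * η + η * h)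
      ≤ (D * M) ^ 2 * h + (D * M * M + 1) * η := by
    calc _ = ((n : ℝ) * h) * ((D * M) ^ 2 * h + (D * M * M + 1) * η) := by ring
      _ ≤ 1 * ((D * M) ^ 2 * h + (D * M * M + 1) * η) := by gcongr
      _ = _ := one_mul _
  have hηe : (D * M * M + 1) * η = ε / 2 := by rw [hη]; field_simp
  refine (norm_sub_le _ _).trans_lt ?_
  calc _ ≤ (D * M) ^ 2 * h + (D * M * M + 1) * η + D * M * h :=
        add_le_add (hS.trans hS2) hfirst
    _ < ε := by rw [hηe]; linarith
end

section
/- Let ρ > 1 and let B_ρ = { (z + z^{−1})/2 : z ∈ ℂ, ρ^{−1} < |z| < ρ } be the open Bernstein ellipse with parameter ρ (an open neighborhood of [−1,1]). Suppose f : B_ρ → ℂ is analytic with M = sup_{z∈B_ρ} |f(z)| < ∞. Define the Chebyshev coefficients a_0 = (1/π) ∫_{−1}^{1} f(y)/√(1−y²) dy and a_k = (2/π) ∫_{−1}^{1} f(y) T_k(y)/√(1−y²) dy for k ≥ 1. Then |a_k| ≤ 2 M ρ^{−k} for all k ≥ 0, and for every m ≥ 0, max_{y∈[−1,1]} | f(y)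 − Σ_{k=0}^{m} a_k T_k(y) | ≤ 4 M ρ^{−m}/(ρ − 1). -/
open Complex Filter MeasureTheory

theorem cheb_subst (F : ℝ → ℂ) :
    ∫ y in (-1:ℝ)..1, F y / ((Real.sqrt (1 - y ^ 2) : ℝ) : ℂ)
      = ∫ θ in (0:ℝ)..Real.pi, F (Real.cos θ) := by
  have h : ∫ x in (1:ℝ)..(-1), (-(1 / √(1 - x ^ 2)) : ℝ) • ((fun θ => F (Real.cos θ)) ∘ Real.arccos) x
      = ∫ θ in (Real.arccos 1)..(Real.arccos (-1)), F (Real.cos θ) := by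
    rw [← intervalIntegral.integral_deriv_smul_comp_of_deriv_nonpos (f' := fun x => -(1 / √(1 - x ^ 2)))]
    · exact Real.continuous_arccos.continuousOn
    · exact fun x hx ↦ (Real.hasDerivAt_arccos (by aesop) (by aesop))
    · simp
  rw [Real.arccos_one, Real.arccos_neg_one] at h
  rw [← h]
  rw [intervalIntegral.integral_symm, ← intervalIntegral.integral_neg]
  refine intervalIntegral.integral_congr fun x hx => ?_
  rw [Set.uIcc_comm, Set.uIcc_of_le (by norm_num)] at hx
  simp [Real.cos_arccos hx.1 hx.2]
  ring

theorem ann_bound (ρ : ℝ) (hρ : 1 < ρ) (g : ℂ → ℂ)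
    (hg : DifferentiableOn ℂ g {z | ρ⁻¹ < ‖z‖ ∧ ‖z‖ < ρ}) (M : ℝ)
    (hM : ∀ z, ρ⁻¹ < ‖z‖ → ‖z‖ < ρ → ‖g z‖ ≤ M) (n : ℕ) :
    ‖(2 * Real.pi * I : ℂ)⁻¹ • ∮ z in C(0, 1), (z - 0)⁻¹ • (g z * (z ^ n)⁻¹)‖ ≤ M * ρ ^ (-(n:ℤ)) := by
  have hinv : ρ⁻¹ < 1 := inv_lt_one_of_one_lt₀ hρ
  have hopen : IsOpen {z : ℂ | ρ⁻¹ < ‖z‖ ∧ ‖z‖ < ρ} :=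
    (isOpen_lt continuous_const continuous_norm).inter (isOpen_lt continuous_norm continuous_const)
  have hd : ∀ z : ℂ, ρ⁻¹ < ‖z‖ → ‖z‖ < ρ → DifferentiableAt ℂ (fun z => g z * (z ^ n)⁻¹) z := by
    intro z h1 h2
    have hz : z ≠ 0 := by
      rintro rfl
      rw [norm_zero] at h1
      have : 0 < ρ⁻¹ := by positivity
      linarith
    have := hg.differentiableAt (hopen.mem_nhds (show z ∈ _ from ⟨h1, h2⟩))
    exact this.mul ((differentiableAt_id.pow n).inv (pow_ne_zero _ hz))
  have key : ∀ r : ℝ, 1 < r → r < ρ →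
      ‖(2 * Real.pi * I : ℂ)⁻¹ • ∮ z in C(0, 1), (z - 0)⁻¹ • (g z * (z ^ n)⁻¹)‖ ≤ M * r ^ (-(n:ℤ)) := by
    intro r h1 h2
    rw [← Complex.circleIntegral_sub_center_inv_smul_eq_of_differentiable_on_annulus_off_countable
      one_pos h1.le Set.countable_empty]
    · refine (circleIntegral.norm_two_pi_i_inv_smul_integral_le_of_norm_le_const (C := r⁻¹ * (M * r ^ (-(n:ℤ)))) (by linarith) ?_).trans ?_
      · intro z hz
        have hz : ‖z‖ = r := by simpa using hz
        rw [sub_zero, norm_smul, norm_inv, norm_mul, norm_inv, norm_pow, hz, zpow_neg, zpow_natCast]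
        have := hM z (by linarith) (by linarith)
        have : 0 < r := by linarith
        gcongr
      · rw [← mul_assoc, mul_inv_cancel₀ (by linarith), one_mul]
    · intro z hz
      simp at hz
      exact (hd z (by linarith) (by linarith)).continuousAt.continuousWithinAt
    · intro z hz
      simp at hz
      exact hd z (by linarith) (by linarith)
  have ht : Tendsto (fun r : ℝ => M * r ^ (-(n:ℤ))) (nhdsWithin ρ (Set.Iio ρ)) (nhds (M * ρ ^ (-(n:ℤ)))) := by
    have : ContinuousAt (fun r : ℝ => M * r ^ (-(n:ℤ))) ρ :=
      continuousAt_const.mul (continuousAt_zpow₀ _ _ (Or.inl (by linarith)))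
    exact this.tendsto.mono_left nhdsWithin_le_nhds
  refine ge_of_tendsto ht ?_
  filter_upwards [Ioo_mem_nhdsLT hρ] with r hr using key r hr.1 hr.2

theorem half_range (F : ℝ → ℂ) (hF : Continuous F) (heven : ∀ θ, F (-θ) = F θ)
    (n : ℤ) :
    ∫ θ in (-Real.pi)..Real.pi, Complex.exp (-(I * n * θ)) * F θ
      = 2 * ∫ θ in (0:ℝ)..Real.pi, F θ * ((Real.cos (n * θ) : ℝ) : ℂ) := by
  have hi : ∀ a b, IntervalIntegrable (fun θ : ℝ => Complex.exp (-(I * n * θ)) * F θ) volume a b :=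
    fun a b => Continuous.intervalIntegrable (by fun_prop) _ _
  have hi' : ∀ a b, IntervalIntegrable (fun θ : ℝ => Complex.exp (I * n * θ) * F θ) volume a b :=
    fun a b => Continuous.intervalIntegrable (by fun_prop) _ _
  rw [← intervalIntegral.integral_add_adjacent_intervals (hi _ 0) (hi 0 _)]
  have : ∫ θ in (-Real.pi)..0, Complex.exp (-(I * n * θ)) * F θ
      = ∫ θ in (0:ℝ)..Real.pi, Complex.exp (I * n * θ) * F θ := by
    have := intervalIntegral.integral_comp_neg (a := 0) (b := Real.pi)
      (fun θ : ℝ => Complex.exp (-(I * n * θ)) * F θ)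
    rw [neg_zero] at this
    rw [← this]
    simp [heven]
  rw [this, ← intervalIntegral.integral_add (hi' _ _) (hi _ _), ← intervalIntegral.integral_const_mul]
  congr 1
  ext θ
  push_cast
  rw [Complex.cos]
  ring_nf

theorem coeff_circle (g : ℂ → ℂ) (F : ℝ → ℂ) (hF : ∀ θ : ℝ, g (Complex.exp (θ * I)) = F θ)
    (hp : Function.Periodic F (2 * Real.pi)) (n : ℕ) :
    (2 * Real.pi * I : ℂ)⁻¹ • ∮ z in C(0, 1), (z - 0)⁻¹ • (g z * (z ^ n)⁻¹)
      = (2 * Real.pi : ℂ)⁻¹ * ∫ θ in (-Real.pi)..Real.pi, Complex.exp (-(I * n * θ)) * F θ := by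
  have h1 : (∮ z in C(0, 1), (z - 0)⁻¹ • (g z * (z ^ n)⁻¹))
      = ∫ θ in (0:ℝ)..2 * Real.pi, I * (Complex.exp (-(I * n * θ)) * F θ) := by
    rw [circleIntegral]
    congr 1
    ext θ
    have : (Complex.exp (θ * I)) ≠ 0 := Complex.exp_ne_zero _
    simp only [deriv_circleMap, circleMap, zero_add, ofReal_one, one_mul, sub_zero, smul_eq_mul, hF,
      ← Complex.exp_nat_mul, ← Complex.exp_neg]
    rw [Complex.exp_neg]
    field_simp
  have hper : Function.Periodic (fun θ : ℝ => Complex.exp (-(I * n * θ)) * F θ) (2 * Real.pi) := by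
    intro θ
    simp only [hp θ]
    congr 1
    rw [Complex.exp_eq_exp_iff_exists_int]
    refine ⟨-n, ?_⟩
    push_cast
    ring
  have h2 := hper.intervalIntegral_add_eq 0 (-Real.pi)
  rw [zero_add, show -Real.pi + 2 * Real.pi = Real.pi by ring] at h2
  rw [h1, intervalIntegral.integral_const_mul, h2, smul_eq_mul, mul_inv]
  field_simp

theorem fourier_cos (F : ℝ → ℂ) (hF : Continuous F) (heven : ∀ θ, F (-θ) = F θ)
    (hp : Function.Periodic F (2 * Real.pi)) (c : ℤ → ℂ)
    (hc : ∀ n : ℤ, c n = (2 * Real.pi : ℂ)⁻¹ *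
      ∫ θ in (-Real.pi)..Real.pi, Complex.exp (-(I * n * θ)) * F θ)
    (hs : Summable c) (θ : ℝ) :
    HasSum (fun n : ℤ => c n * Complex.exp (I * n * θ)) (F θ) := by
  have : Fact (0 < 2 * Real.pi) := ⟨Real.two_pi_pos⟩
  let f : C(AddCircle (2 * Real.pi), ℂ) := ⟨hp.lift, continuous_coinduced_dom.mpr hF⟩
  have hπ : (Real.pi : ℂ) ≠ 0 := by exact_mod_cast Real.pi_ne_zero
  have hcf : fourierCoeff f = c := by
    ext n
    rw [fourierCoeff_eq_intervalIntegral _ n (-Real.pi), hc,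
      show -Real.pi + 2 * Real.pi = Real.pi by ring, Complex.real_smul]
    push_cast
    rw [one_div]
    congr 2
    ext x
    rw [fourier_coe_apply, smul_eq_mul]
    congr 2
    push_cast
    field_simp
  have := has_pointwise_sum_fourier_series_of_summable (f := f) (hcf ▸ hs) (θ : AddCircle (2 * Real.pi))
  rw [hcf] at this
  change HasSum _ (F θ) at this
  convert this using 1
  ext n
  rw [fourier_coe_apply, smul_eq_mul]
  congr 2
  push_cast
  field_simp

/-- Let `ρ > 1` and let `B_ρ` be the open Bernstein ellipse
`{(z + z⁻¹)/2 : ρ⁻¹ < |z| < ρ}`.  If `f` is analytic on `B_ρ` and bounded by `M` there,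
and `a_k` are its Chebyshev coefficients (`a₀ = (1/π)∫ f/√(1-y²)`,
`a_k = (2/π)∫ f T_k/√(1-y²)` for `k ≥ 1`), then `|a_k| ≤ 2 M ρ^{-k}` for all `k ≥ 0` and
`max_{y∈[-1,1]} |f(y) - ∑_{k=0}^m a_k T_k(y)| ≤ 4 M ρ^{-m}/(ρ - 1)` for every `m ≥ 0`. -/
theorem stmt_6
    (ρ : ℝ) (hρ : 1 < ρ)
    (B : Set ℂ)
    (hB : B = {w : ℂ | ∃ z : ℂ, ρ⁻¹ < ‖z‖ ∧ ‖z‖ < ρ ∧ w = (z + z⁻¹) / 2})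
    (f : ℂ → ℂ) (hf : DifferentiableOn ℂ f B)
    (M : ℝ) (hM : ∀ z ∈ B, ‖f z‖ ≤ M)
    (a : ℕ → ℂ)
    (ha0 : a 0 = (1 / Real.pi) *
      ∫ y in (-1:ℝ)..1, f (y : ℂ) / ((Real.sqrt (1 - y ^ 2) : ℝ) : ℂ))
    (hak : ∀ k : ℕ, 1 ≤ k → a k = (2 / Real.pi) *
      ∫ y in (-1:ℝ)..1,
        f (y : ℂ) * (((Polynomial.Chebyshev.T ℝ k).eval y : ℝ) : ℂ)
          / ((Real.sqrt (1 - y ^ 2) : ℝ) : ℂ)) :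
    (∀ k : ℕ, ‖a k‖ ≤ 2 * M * ρ ^ (-(k : ℤ))) ∧
    ∀ m : ℕ, ∀ y ∈ Set.Icc (-1:ℝ) 1,
      ‖f (y : ℂ) - ∑ k ∈ Finset.range (m + 1),
          a k * (((Polynomial.Chebyshev.T ℝ k).eval y : ℝ) : ℂ)‖
        ≤ 4 * M * ρ ^ (-(m : ℤ)) / (ρ - 1) := by
  have hinv : ρ⁻¹ < 1 := inv_lt_one_of_one_lt₀ hρ
  have hρ0 : 0 < ρ := by linarith
  have hπ : (Real.pi : ℂ) ≠ 0 := by exact_mod_cast Real.pi_ne_zero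
  set g : ℂ → ℂ := fun z => f ((z + z⁻¹) / 2) with hgdef
  set F : ℝ → ℂ := fun θ => f (Real.cos θ : ℝ) with hFdef
  have hmaps : Set.MapsTo (fun z : ℂ => (z + z⁻¹) / 2) {z | ρ⁻¹ < ‖z‖ ∧ ‖z‖ < ρ} B := by
    intro z hz
    rw [hB]
    exact ⟨z, hz.1, hz.2, rfl⟩
  have hg : DifferentiableOn ℂ g {z | ρ⁻¹ < ‖z‖ ∧ ‖z‖ < ρ} := by
    refine hf.comp ?_ hmaps
    intro z hz
    have hz0 : z ≠ 0 := by
      rintro rfl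
      have h1 := hz.1
      rw [norm_zero] at h1
      have : 0 < ρ⁻¹ := by positivity
      linarith
    exact ((differentiableAt_id.add (differentiableAt_inv hz0)).div_const 2).differentiableWithinAt
  have hgM : ∀ z, ρ⁻¹ < ‖z‖ → ‖z‖ < ρ → ‖g z‖ ≤ M := fun z h1 h2 => hM _ (hmaps ⟨h1, h2⟩)
  have hM0 : 0 ≤ M := (norm_nonneg _).trans (hgM 1 (by simpa using hinv) (by simpa using hρ))
  have hgF : ∀ θ : ℝ, g (Complex.exp (θ * I)) = F θ := by
    intro θ
    simp only [hgdef, hFdef]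
    congr 1
    push_cast
    rw [Complex.cos, ← Complex.exp_neg, neg_mul]
  have hFc : Continuous F := by
    have : F = g ∘ (fun θ : ℝ => Complex.exp (θ * I)) := by
      ext θ; exact (hgF θ).symm
    rw [this]
    refine hg.continuousOn.comp_continuous (by fun_prop) ?_
    intro θ
    simp only [Set.mem_ofPred_eq, Complex.norm_exp_ofReal_mul_I]
    exact ⟨hinv, hρ⟩
  have heven : ∀ θ, F (-θ) = F θ := by intro θ; simp [hFdef]
  have hp : Function.Periodic F (2 * Real.pi) := by intro θ; simp only [hFdef, Real.cos_add_two_pi]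
  set c : ℤ → ℂ := fun n => (2 * Real.pi : ℂ)⁻¹ *
      ∫ θ in (-Real.pi)..Real.pi, Complex.exp (-(I * n * θ)) * F θ with hcdef
  have hc1 : ∀ n : ℤ, c n = (Real.pi : ℂ)⁻¹ *
      ∫ θ in (0:ℝ)..Real.pi, F θ * ((Real.cos (n * θ) : ℝ) : ℂ) := by
    intro n
    simp only [hcdef]
    rw [half_range F hFc heven n]
    field_simp
  have hcneg : ∀ n : ℤ, c (-n) = c n := by
    intro n
    rw [hc1, hc1]
    simp
  have hcb : ∀ n : ℕ, ‖c n‖ ≤ M * ρ ^ (-(n:ℤ)) := by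
    intro n
    have h1 := ann_bound ρ hρ g hg M hgM n
    rw [coeff_circle g F hgF hp n] at h1
    simpa [hcdef] using h1
  have ha0' : a 0 = c 0 := by
    rw [ha0, hc1, cheb_subst (fun y => f y)]
    simp [hFdef]
  have hak' : ∀ k : ℕ, 1 ≤ k → a k = 2 * c k := by
    intro k hk
    rw [hak k hk, hc1,
      cheb_subst (fun y => f (y : ℂ) * (((Polynomial.Chebyshev.T ℝ k).eval y : ℝ) : ℂ))]
    simp only [Polynomial.Chebyshev.T_real_cos, hFdef]
    ring
  have hab : ∀ k : ℕ, ‖a k‖ ≤ 2 * M * ρ ^ (-(k : ℤ)) := by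
    intro k
    have h1 := hcb k
    have h2 := norm_nonneg (c k)
    rcases Nat.eq_zero_or_pos k with rfl | hk
    · rw [ha0']
      simp at h1 ⊢
      linarith
    · rw [hak' k hk, norm_mul, Complex.norm_ofNat]
      linarith
  refine ⟨hab, ?_⟩
  have hgeo : Summable (fun n : ℕ => M * ρ ^ (-(n:ℤ))) := by
    have := (summable_geometric_of_lt_one (by positivity) hinv).mul_left M
    simpa [zpow_neg] using this
  have hs : Summable c := by
    have h1 : Summable (fun n : ℕ => c n) := Summable.of_norm_bounded hgeo hcb
    refine Summable.of_nat_of_neg h1 ?_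
    simpa [hcneg] using h1
  intro m y hy
  set θ := Real.arccos y with hθ
  have hyθ : Real.cos θ = y := Real.cos_arccos hy.1 hy.2
  have hsum := (fourier_cos F hFc heven hp c (fun n => rfl) hs θ).nat_add_neg
  have hFy : F θ = f y := by simp only [hFdef, hyθ]
  have hT : ∀ k : ℕ, c k * Complex.exp (I * ((k:ℤ):ℂ) * θ) + c (-k) * Complex.exp (I * ((-(k:ℤ) : ℤ):ℂ) * θ)
      = 2 * c k * (((Polynomial.Chebyshev.T ℝ k).eval y : ℝ) : ℂ) := by
    intro k
    rw [hcneg, ← hyθ, Polynomial.Chebyshev.T_real_cos]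
    push_cast
    rw [Complex.cos]
    ring_nf
  simp only [hT] at hsum
  have htail := (hasSum_nat_add_iff' (m + 1)).mpr hsum
  have hval : F θ + c 0 * Complex.exp (I * ((0:ℤ):ℂ) * θ) - ∑ i ∈ Finset.range (m + 1),
      2 * c i * (((Polynomial.Chebyshev.T ℝ i).eval y : ℝ) : ℂ)
      = f (y : ℂ) - ∑ k ∈ Finset.range (m + 1),
          a k * (((Polynomial.Chebyshev.T ℝ k).eval y : ℝ) : ℂ) := by
    rw [Finset.sum_range_succ', Finset.sum_range_succ', hFy]
    have : ∀ k : ℕ, a (k + 1) = 2 * c ((k + 1 : ℕ) : ℤ) := fun k => hak' (k + 1) (by omega)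
    simp only [this, ha0']
    simp
    ring
  rw [hval] at htail
  have hgs : HasSum (fun n : ℕ => 2 * M * ρ ^ (-((n + (m + 1) : ℕ) : ℤ)))
      (2 * M * ρ ^ (-(m : ℤ)) / (ρ - 1)) := by
    have h := (hasSum_geometric_of_lt_one (by positivity) hinv).mul_left (2 * M * (ρ ^ (m + 1))⁻¹)
    have e1 : (fun n : ℕ => 2 * M * ρ ^ (-((n + (m + 1) : ℕ) : ℤ)))
        = fun n : ℕ => 2 * M * (ρ ^ (m + 1))⁻¹ * ρ⁻¹ ^ n := by
      ext n
      rw [zpow_neg, zpow_natCast, pow_add, mul_inv, inv_pow]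
      ring
    have e2 : 2 * M * ρ ^ (-(m : ℤ)) / (ρ - 1) = 2 * M * (ρ ^ (m + 1))⁻¹ * (1 - ρ⁻¹)⁻¹ := by
      have h1 : ρ - 1 ≠ 0 := by linarith
      have h2 : 1 - ρ⁻¹ = (ρ - 1) / ρ := by field_simp
      rw [zpow_neg, zpow_natCast, pow_succ, h2]
      field_simp
    rw [e1, e2]
    exact h
  have hb := tsum_of_norm_bounded hgs (f := fun n : ℕ => 2 * c ((n + (m + 1) : ℕ) : ℤ) *
      (((Polynomial.Chebyshev.T ℝ ((n + (m + 1) : ℕ) : ℤ)).eval y : ℝ) : ℂ)) (by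
    intro n
    have h1 := hcb (n + (m + 1))
    rw [norm_mul, norm_mul, Complex.norm_ofNat, Complex.norm_real, ← hyθ,
      Polynomial.Chebyshev.T_real_cos, Real.norm_eq_abs]
    have h2 := Real.abs_cos_le_one (((n + (m + 1) : ℕ) : ℤ) * θ)
    calc _ ≤ 2 * ‖c ((n + (m + 1) : ℕ) : ℤ)‖ * 1 := by gcongr
      _ ≤ _ := by linarith)
  rw [htail.tsum_eq] at hb
  refine hb.trans ?_
  have : 0 < ρ - 1 := by linarith
  gcongr
  norm_num
end

section
/- The g × g complex matrix A with entries A_{kj} = ∫_{β_j}^{α_{j+1}} ζ^{k−1}/R(ζ) dζ (k, j = 1, …, g), where the integrals are taken over the gaps (β_j, α_{j+1}) and converge absolutely since 1/R has only square-root singularities at the gap endpoints, is invertible. -/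
open Complex Filter


lemma aux_exists_zero (f : ℝ → ℝ) (a b : ℝ) (hab : a < b) (hc : ContinuousOn f (Set.Ioo a b))
    (hi : IntervalIntegrable f MeasureTheory.volume a b) (h0 : ∫ x in a..b, f x = 0) :
    ∃ x ∈ Set.Ioo a b, f x = 0 := by
  by_contra! hne
  have key : (∀ x ∈ Set.Ioo a b, 0 < f x) ∨ (∀ x ∈ Set.Ioo a b, 0 < -f x) := by
    by_contra! hcon
    obtain ⟨⟨x, hx, hx0⟩, ⟨y, hy, hy0⟩⟩ := hcon
    have hm : (0 : ℝ) ∈ f '' Set.Ioo a b :=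
      isPreconnected_Ioo.intermediate_value hx hy hc ⟨hx0, by linarith⟩
    obtain ⟨z, hz, hz0⟩ := hm
    exact hne z hz hz0
  rcases key with h | h
  · have := intervalIntegral.intervalIntegral_pos_of_pos_on hi h hab
    linarith
  · have := intervalIntegral.intervalIntegral_pos_of_pos_on hi.neg h hab
    simp only [Pi.neg_apply, intervalIntegral.integral_neg] at this
    linarith

lemma aux_integrable (r S : ℝ → ℝ) (a b : ℝ) (hab : a < b)
    (hr : ContinuousOn r (Set.Ioo a b)) (hr0 : ∀ x ∈ Set.Ioo a b, r x ≠ 0)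
    (hS : ContinuousOn S (Set.Icc a b)) (hS0 : ∀ x ∈ Set.Icc a b, S x ≠ 0)
    (hrS : ∀ x ∈ Set.Ioo a b, r x ^ 2 = (x - a) * (b - x) * |S x|) :
    IntervalIntegrable (fun x => (r x)⁻¹) MeasureTheory.volume a b := by
  obtain ⟨x0, hx0, hmin⟩ := isCompact_Icc.exists_isMinOn
    (Set.nonempty_Icc.mpr hab.le) hS.abs
  have hc : 0 < |S x0| := abs_pos.mpr (hS0 x0 hx0)
  set c := |S x0| with hcdef
  have h1 : IntervalIntegrable (fun x : ℝ => (x - a) ^ (-(1/2) : ℝ)) MeasureTheory.volume a b := by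
    have := (intervalIntegral.intervalIntegrable_rpow' (a := 0) (b := b - a)
      (r := (-(1/2) : ℝ)) (by norm_num)).comp_sub_right a
    simpa using this
  have h2 : IntervalIntegrable (fun x : ℝ => (b - x) ^ (-(1/2) : ℝ)) MeasureTheory.volume a b := by
    have := (intervalIntegral.intervalIntegrable_rpow' (a := b - a) (b := 0)
      (r := (-(1/2) : ℝ)) (by norm_num)).comp_sub_left b
    simpa using this
  have h3 := (h1.add h2).const_mul ((c * (b - a)) ^ (-(1/2) : ℝ))
  rw [intervalIntegrable_iff_integrableOn_Ioo_of_le hab.le] at h3 ⊢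
  refine MeasureTheory.Integrable.mono' h3 ?_ ?_
  · exact (hr.inv₀ hr0).aestronglyMeasurable measurableSet_Ioo
  · refine (MeasureTheory.ae_restrict_iff' measurableSet_Ioo).mpr (Eventually.of_forall ?_)
    intro x hx
    have hu : 0 < x - a := by linarith [hx.1]
    have hv : 0 < b - x := by linarith [hx.2]
    have hL : 0 < b - a := by linarith
    have hcx : c ≤ |S x| := hmin ⟨hx.1.le, hx.2.le⟩
    have e : ∀ t : ℝ, 0 < t → (t ^ (-(1/2) : ℝ)) ^ 2 = t⁻¹ := by
      intro t ht
      rw [← Real.rpow_natCast, ← Real.rpow_mul ht.le]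
      norm_num [Real.rpow_neg_one]
    have hpu : 0 < (x - a) ^ (-(1/2) : ℝ) := Real.rpow_pos_of_pos hu _
    have hpv : 0 < (b - x) ^ (-(1/2) : ℝ) := Real.rpow_pos_of_pos hv _
    have hpc : 0 < (c * (b - a)) ^ (-(1/2) : ℝ) := Real.rpow_pos_of_pos (by positivity) _
    rw [Real.norm_eq_abs]
    refine abs_le_of_sq_le_sq ?_ (by positivity)
    rw [mul_pow, e _ (by positivity), inv_pow, hrS x hx]
    have hsum : (x - a)⁻¹ + (b - x)⁻¹ ≤
        ((x - a) ^ (-(1/2) : ℝ) + (b - x) ^ (-(1/2) : ℝ)) ^ 2 := by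
      rw [add_sq, e _ hu, e _ hv]
      have := mul_pos hpu hpv
      linarith
    calc ((x - a) * (b - x) * |S x|)⁻¹ ≤ ((x - a) * (b - x) * c)⁻¹ := by gcongr
      _ = (c * (b - a))⁻¹ * ((x - a)⁻¹ + (b - x)⁻¹) := by
        field_simp
        ring
      _ ≤ _ := by gcongr

lemma aux_prod (a b : ℕ → ℝ) (x : ℝ) (g : ℕ) :
    (x - a (g + 1)) * ∏ j ∈ Finset.Icc 1 g, ((x - a j) * (x - b j)) =
    (x - a 1) * ∏ j ∈ Finset.Icc 1 g, ((x - b j) * (x - a (j + 1))) := by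
  induction g with
  | zero => simp
  | succ n ih =>
    rw [Finset.prod_Icc_succ_top (by omega), Finset.prod_Icc_succ_top (by omega)]
    linear_combination (x - b (n+1)) * (x - a (n + 1 + 1)) * ih

/-- In the band/gap setting (`g ≥ 1`, `0 ≤ α₁ < β₁ < ⋯ < β_g < α_{g+1}`,
`P`, `σ_B` as usual) let `R` be the (unique) function analytic on `ℂ ∖ σ_B` with
`R² = P` and `R(λ) = |λ|^{g+1/2}((-1)^g i + o(1))` as `λ → -∞` along ℝ (purely imaginary
and nonvanishing on the gaps).  Then the `g × g` matrix `A` with entries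
`A_{kj} = ∫_{β_j}^{α_{j+1}} ζ^{k-1}/R(ζ) dζ` is invertible. -/
theorem stmt_8
    (g : ℕ) (hg : 1 ≤ g) (a b : ℕ → ℝ)
    (ha1 : 0 ≤ a 1)
    (hord : ∀ j ∈ Finset.Icc 1 g, a j < b j ∧ b j < a (j + 1))
    (P : ℂ → ℂ)
    (hP : ∀ z : ℂ, P z = (z - (a (g + 1) : ℂ)) *
      ∏ j ∈ Finset.Icc 1 g, ((z - (a j : ℂ)) * (z - (b j : ℂ))))
    (σB : Set ℝ)
    (hσB : σB = Set.Ici (a (g + 1)) ∪ ⋃ j ∈ Finset.Icc 1 g, Set.Icc (a j) (b j))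
    (Ω : Set ℂ) (hΩ : Ω = {z : ℂ | ¬(z.im = 0 ∧ z.re ∈ σB)})
    (R : ℂ → ℂ)
    (hRanal : DifferentiableOn ℂ R Ω)
    (hRsq : ∀ z ∈ Ω, R z ^ 2 = P z)
    (hRasym : Tendsto (fun x : ℝ => R (x : ℂ) / (((|x| ^ ((g : ℝ) + 1/2) : ℝ)) : ℂ))
      atBot (nhds ((-1 : ℂ) ^ g * Complex.I)))
    (hRgap : ∀ j ∈ Finset.Icc 1 g, ∀ x ∈ Set.Ioo (b j) (a (j + 1)),
      (R (x : ℂ)).re = 0 ∧ R (x : ℂ) ≠ 0)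
    (A : Matrix (Fin g) (Fin g) ℂ)
    (hA : ∀ k j : Fin g,
      A k j = ∫ ζ in (b ((j : ℕ) + 1))..(a ((j : ℕ) + 2)), ((ζ : ℂ)) ^ (k : ℕ) / R (ζ : ℂ)) :
    IsUnit A.det := by
  have hmono : ∀ i j : ℕ, 1 ≤ i → i ≤ j → j ≤ g + 1 → a i ≤ a j := by
    intro i j hi hij
    induction j, hij using Nat.le_induction with
    | base => intro _; exact le_rfl
    | succ n hn ih =>
      intro h
      have := hord n (Finset.mem_Icc.mpr ⟨by omega, by omega⟩)
      linarith [ih (by omega)]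
  have hgapΩ : ∀ j ∈ Finset.Icc 1 g, ∀ x ∈ Set.Ioo (b j) (a (j + 1)), (x : ℂ) ∈ Ω := by
    intro j hj x hx
    have hj' := Finset.mem_Icc.mp hj
    rw [hΩ, hσB]
    rintro ⟨-, h⟩
    simp only [Complex.ofReal_re, Set.mem_union, Set.mem_Ici, Set.mem_iUnion, Set.mem_Icc] at h
    rcases h with h | ⟨i, hi, h1, h2⟩
    · linarith [hmono (j+1) (g+1) (by omega) (by omega) le_rfl, hx.2]
    · have hi' := Finset.mem_Icc.mp hi
      rcases lt_or_ge j i with hji | hij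
      · linarith [hmono (j+1) i (by omega) (by omega) (by omega), hx.2]
      · rcases hij.eq_or_lt with rfl | hij
        · linarith [hx.1]
        · linarith [hmono (i+1) j (by omega) (by omega) (by omega), hx.1, (hord i hi).2,
            (hord j hj).1]
  set r : ℝ → ℝ := fun x => (R (x : ℂ)).im with hr
  have hRr : ∀ j ∈ Finset.Icc 1 g, ∀ x ∈ Set.Ioo (b j) (a (j + 1)),
      R (x : ℂ) = Complex.I * (r x : ℂ) ∧ r x ≠ 0 := by
    intro j hj x hx
    have h := hRgap j hj x hx
    have h1 : R (x : ℂ) = Complex.I * (r x : ℂ) := by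
      apply Complex.ext <;> simp [hr, h.1]
    refine ⟨h1, fun h0 => h.2 ?_⟩
    rw [h1, h0]; simp
  have hrc : ∀ j ∈ Finset.Icc 1 g, ContinuousOn r (Set.Ioo (b j) (a (j + 1))) := by
    intro j hj
    refine Complex.continuous_im.comp_continuousOn ?_
    exact hRanal.continuousOn.comp Complex.continuous_ofReal.continuousOn
      (fun x hx => hgapΩ j hj x hx)
  have hint : ∀ j ∈ Finset.Icc 1 g,
      IntervalIntegrable (fun x => (r x)⁻¹) MeasureTheory.volume (b j) (a (j + 1)) := by
    intro j hj
    have hj' := Finset.mem_Icc.mp hj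
    have hoj := hord j hj
    refine aux_integrable r
      (fun x => (x - a 1) * ∏ i ∈ (Finset.Icc 1 g).erase j, ((x - b i) * (x - a (i + 1))))
      (b j) (a (j + 1)) hoj.2 (hrc j hj) (fun x hx => (hRr j hj x hx).2) ?_ ?_ ?_
    · fun_prop
    · intro x hx
      have := hmono 1 j (by omega) (by omega) (by omega)
      refine mul_ne_zero (by linarith [hx.1] |> fun (h : 0 < x - a 1) => h.ne') ?_
      rw [Finset.prod_ne_zero_iff]
      intro i hi
      obtain ⟨hne, hi⟩ := Finset.mem_erase.mp hi
      have hi' := Finset.mem_Icc.mp hi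
      have hoi := hord i hi
      rcases lt_or_gt_of_ne hne with h | h
      · have := hmono (i+1) j (by omega) (by omega) (by omega)
        have h1 : 0 < x - b i := by linarith [hx.1]
        have h2 : 0 < x - a (i+1) := by linarith [hx.1]
        positivity
      · have := hmono (j+1) i (by omega) (by omega) (by omega)
        have h1 : x - b i < 0 := by linarith [hx.2]
        have h2 : x - a (i+1) < 0 := by linarith [hx.2]
        exact mul_ne_zero h1.ne h2.ne
    · intro x hx
      have h1 := hRsq x (hgapΩ j hj x hx)
      rw [(hRr j hj x hx).1, hP, mul_pow, Complex.I_sq] at h1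
      have h2 : -(r x)^2 = (x - a (g + 1)) * ∏ j ∈ Finset.Icc 1 g, ((x - a j) * (x - b j)) := by
        have : ((-(r x)^2 : ℝ) : ℂ) =
          (((x - a (g + 1)) * ∏ j ∈ Finset.Icc 1 g, ((x - a j) * (x - b j)) : ℝ) : ℂ) := by
          push_cast
          rw [← h1]; ring
        exact_mod_cast this
      rw [aux_prod, ← Finset.mul_prod_erase _ _ hj] at h2
      have hu : 0 < x - b j := by linarith [hx.1]
      have hv : 0 < a (j+1) - x := by linarith [hx.2]
      have h3 : r x ^ 2 = (x - b j) * (a (j+1) - x) *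
          ((x - a 1) * ∏ i ∈ (Finset.Icc 1 g).erase j, ((x - b i) * (x - a (i + 1)))) := by
        linear_combination -h2
      rw [abs_of_nonneg, h3]
      have : 0 < (x - b j) * (a (j+1) - x) := by positivity
      by_contra! hneg
      have := mul_neg_of_pos_of_neg this hneg
      nlinarith [sq_nonneg (r x)]
  set B : Matrix (Fin g) (Fin g) ℝ := fun k j =>
    ∫ x in (b ((j : ℕ) + 1))..(a ((j : ℕ) + 2)), x ^ (k : ℕ) * (r x)⁻¹ with hB
  have hjm : ∀ j : Fin g, (j : ℕ) + 1 ∈ Finset.Icc 1 g := fun j =>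
    Finset.mem_Icc.mpr ⟨by omega, by omega⟩
  have hAB : A = (-Complex.I) • B.map (Complex.ofRealHom) := by
    ext k j
    rw [hA]
    have hBk : B k j = ∫ x in (b ((j : ℕ) + 1))..(a ((j : ℕ) + 2)), x ^ (k : ℕ) * (r x)⁻¹ := rfl
    simp only [Matrix.smul_apply, Matrix.map_apply, Complex.ofRealHom_eq_coe, smul_eq_mul]
    rw [hBk]
    rw [← intervalIntegral.integral_ofReal, ← intervalIntegral.integral_const_mul]
    have hlt := (hord _ (hjm j)).2
    refine intervalIntegral.integral_congr_ae_restrict ?_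
    rw [Set.uIoc_of_le hlt.le, ← MeasureTheory.restrict_Ioo_eq_restrict_Ioc]
    refine (MeasureTheory.ae_restrict_iff' measurableSet_Ioo).mpr (Eventually.of_forall ?_)
    intro x hx
    have h := hRr _ (hjm j) x hx
    have h0 : (r x : ℂ) ≠ 0 := by exact_mod_cast h.2
    simp only
    rw [h.1]
    push_cast
    rw [div_eq_mul_inv, mul_inv, Complex.inv_I]
    ring
  have hBdet : B.det ≠ 0 := by
    intro hdet
    obtain ⟨v, hv0, hv⟩ := Matrix.exists_vecMul_eq_zero_iff.mpr hdet
    have hz : ∀ j : Fin g, ∃ x ∈ Set.Ioo (b ((j : ℕ) + 1)) (a ((j : ℕ) + 2)),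
        ∑ k : Fin g, v k * x ^ (k : ℕ) = 0 := by
      intro j
      have hlt := (hord _ (hjm j)).2
      have hin := hint _ (hjm j)
      have hii : ∀ k : Fin g, IntervalIntegrable (fun x => v k * (x ^ (k : ℕ) * (r x)⁻¹))
          MeasureTheory.volume (b ((j : ℕ) + 1)) (a ((j : ℕ) + 2)) := fun k =>
        (hin.continuousOn_mul (by fun_prop : ContinuousOn (fun x : ℝ => x ^ (k : ℕ)) _)).const_mul _
      have hj := congrFun hv j
      obtain ⟨x, hx, hx0⟩ := aux_exists_zero
        (fun x => ∑ k : Fin g, v k * (x ^ (k : ℕ) * (r x)⁻¹)) _ _ hlt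
        (by
          have h1 : ContinuousOn (fun x => (r x)⁻¹) (Set.Ioo (b ((j : ℕ) + 1)) (a ((j : ℕ) + 1 + 1))) :=
            (hrc _ (hjm j)).inv₀ (fun x hx => (hRr _ (hjm j) x hx).2)
          fun_prop)
        (by
          have := IntervalIntegrable.sum Finset.univ (fun k _ => hii k)
          have he : (fun x => ∑ k : Fin g, v k * (x ^ (k : ℕ) * (r x)⁻¹)) =
              ∑ k : Fin g, fun x => v k * (x ^ (k : ℕ) * (r x)⁻¹) := by
            ext x
            simp
          rw [he]
          exact this)
        (by
          rw [intervalIntegral.integral_finsetSum (fun k _ => hii k)]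
          simpa [Matrix.vecMul, dotProduct, hB] using hj)
      refine ⟨x, hx, ?_⟩
      simp only [← mul_assoc, ← Finset.sum_mul] at hx0
      exact (mul_eq_zero.mp hx0).resolve_right (inv_ne_zero (hRr _ (hjm j) x hx).2)
    choose x hx hx0 using hz
    have hsm : StrictMono x := by
      intro i j hij
      have hij' : (i : ℕ) < j := hij
      have := hmono (i+2) (j+1) (by omega) (by omega) (by omega)
      linarith [(hx i).2, (hx j).1, (hord _ (hjm j)).1]
    have hV : (Matrix.vandermonde x).det ≠ 0 :=
      Matrix.det_vandermonde_ne_zero_iff.mpr hsm.injective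
    apply hv0
    apply Matrix.eq_zero_of_mulVec_eq_zero hV
    ext j
    simp only [Matrix.mulVec, dotProduct, Matrix.vandermonde_apply, Pi.zero_apply]
    rw [← hx0 j]
    exact Finset.sum_congr rfl (fun k _ => mul_comm _ _)
  rw [isUnit_iff_ne_zero, hAB, Matrix.det_smul]
  refine mul_ne_zero (pow_ne_zero _ (neg_ne_zero.mpr Complex.I_ne_zero)) ?_
  have := RingHom.map_det Complex.ofRealHom B
  rw [RingHom.mapMatrix_apply] at this
  rw [← this]
  simpa using hBdet
end

section
/- Assume α₁ = 0 and fix x, t ∈ ℝ. Set θ⁺(ζ; x, t) = √ζ (x + 4ζt) for ζ > 0, with the positive square root. Then the linear system Σ_{j=1}^{g} Ω_j ∫_{β_j}^{α_{j+1}} ζ^{k−1}/R(ζ) dζ = Σ_{j=1}^{g} ∫_{β_j}^{α_{j+1}} 2 θ⁺(ζ; x, t) ζ^{k−1}/R(ζ) dζ, for k = 1, …, g, has a unique solution (Ω₁, …, Ω_g) ∈ ℂ^g, and every Ω_j is real. -/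
open Complex Filter

lemma aux_lin {g : ℕ} (A : Matrix (Fin g) (Fin g) ℝ) (hA : A.det ≠ 0) (c : Fin g → ℝ) :
    ∃ w : Fin g → ℝ, ∀ v : Fin g → ℂ,
      (∀ k, ∑ j, v j * (A k j : ℂ) = (c k : ℂ)) ↔ v = fun j => (w j : ℂ) := by
  have hu : IsUnit A.det := isUnit_iff_ne_zero.mpr hA
  have hw : A.mulVec (A⁻¹.mulVec c) = c := by
    rw [Matrix.mulVec_mulVec, Matrix.mul_nonsing_inv _ hu, Matrix.one_mulVec]
  have hw' : ∀ k, ∑ j, ((A⁻¹.mulVec c) j : ℂ) * (A k j : ℂ) = (c k : ℂ) := by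
    intro k
    have := congrFun hw k
    rw [Matrix.mulVec, dotProduct] at this
    rw [← this]
    push_cast
    exact Finset.sum_congr rfl fun j _ => mul_comm _ _
  clear hw
  generalize A⁻¹.mulVec c = w at hw'
  refine ⟨w, fun v => ⟨fun h => ?_, fun h => ?_⟩⟩
  · have hdet : (A.map (Complex.ofRealHom)).det ≠ 0 := by
      have : (A.map (Complex.ofRealHom)).det = Complex.ofRealHom A.det :=
        (RingHom.map_det Complex.ofRealHom A).symm
      rw [this]
      simpa using hA
    have h0 : v - (fun j => (w j : ℂ)) = 0 := by
      apply Matrix.eq_zero_of_mulVec_eq_zero hdet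
      ext k
      simp only [Matrix.mulVec, dotProduct, Matrix.map_apply, Pi.sub_apply, Pi.zero_apply,
        Complex.ofRealHom_eq_coe, mul_sub, Finset.sum_sub_distrib]
      rw [sub_eq_zero]
      have e1 := h k
      have e2 := hw' k
      simp only [mul_comm] at e1 e2 ⊢
      rw [e1, ← e2]
    exact sub_eq_zero.mp h0
  · subst h
    exact hw'

lemma aux_sign {β α : ℝ} (f : ℝ → ℝ) (hf : ContinuousOn f (Set.Ioo β α))
    (h0 : ∀ x ∈ Set.Ioo β α, f x ≠ 0) :
    (∀ x ∈ Set.Ioo β α, 0 < f x) ∨ (∀ x ∈ Set.Ioo β α, f x < 0) := by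
  by_contra hcon
  push Not at hcon
  obtain ⟨⟨x, hx, hx0⟩, y, hy, hy0⟩ := hcon
  obtain ⟨z, hz, hz0⟩ := isPreconnected_Ioo.intermediate_value hx hy hf ⟨hx0, hy0⟩
  exact h0 z hz hz0

lemma aux_zero {β α : ℝ} (h : β < α) (f : ℝ → ℝ) (hf : ContinuousOn f (Set.Ioo β α))
    (hi : IntervalIntegrable f MeasureTheory.volume β α) (h0 : ∫ x in β..α, f x = 0) :
    ∃ x ∈ Set.Ioo β α, f x = 0 := by
  by_contra hcon
  push Not at hcon
  rcases aux_sign f hf hcon with hp | hp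
  · exact (intervalIntegral.intervalIntegral_pos_of_pos_on hi hp h).ne' h0
  · have := intervalIntegral.intervalIntegral_pos_of_pos_on hi.neg
      (fun x hx => by simpa using hp x hx) h
    simp only [Pi.neg_apply, intervalIntegral.integral_neg, h0] at this
    simp at this

lemma aux_int {β α : ℝ} (h : β < α) (f : ℝ → ℝ) (hf : ContinuousOn f (Set.Ioo β α))
    (Q : ℝ → ℝ) (hQ : Continuous Q) (hQ0 : ∀ x ∈ Set.Icc β α, Q x ≠ 0)
    (hfQ : ∀ x ∈ Set.Ioo β α, (f x) ^ 2 = (x - β) * (α - x) * |Q x|)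
    (q : ℝ → ℝ) (hq : Continuous q) :
    IntervalIntegrable (fun x => q x / f x) MeasureTheory.volume β α := by
  have hpos : ∀ x ∈ Set.Ioo β α, 0 < (f x) ^ 2 := fun x hx => by
    rw [hfQ x hx]
    have := abs_pos.mpr (hQ0 x ⟨hx.1.le, hx.2.le⟩)
    have h1 := sub_pos.mpr hx.1
    have h2 := sub_pos.mpr hx.2
    positivity
  have hne : ∀ x ∈ Set.Ioo β α, f x ≠ 0 := fun x hx h0 => by
    have := hpos x hx; simp [h0] at this
  obtain ⟨x0, hx0, hmin⟩ := isCompact_Icc.exists_isMinOn (Set.nonempty_Icc.mpr h.le)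
    (hQ.abs.continuousOn (s := Set.Icc β α))
  have hm : 0 < |Q x0| := abs_pos.mpr (hQ0 x0 hx0)
  obtain ⟨x1, hx1, hmax⟩ := isCompact_Icc.exists_isMaxOn (Set.nonempty_Icc.mpr h.le)
    (hq.abs.continuousOn (s := Set.Icc β α))
  have hI : IntervalIntegrable
      (fun x => |q x1| / √(|Q x0| * (α - β)) *
        ((x - β) ^ (-(1/2) : ℝ) + (α - x) ^ (-(1/2) : ℝ))) MeasureTheory.volume β α := by
    apply IntervalIntegrable.const_mul
    apply IntervalIntegrable.add
    · have := (intervalIntegral.intervalIntegrable_rpow' (a := 0) (b := α - β)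
        (r := -(1/2)) (by norm_num)).comp_sub_right β
      simpa using this
    · have := (intervalIntegral.intervalIntegrable_rpow' (a := α - β) (b := 0)
        (r := -(1/2)) (by norm_num)).comp_sub_left α
      simpa using this
  rw [intervalIntegrable_iff_integrableOn_Ioo_of_le h.le] at hI ⊢
  refine MeasureTheory.Integrable.mono' hI ?_ ?_
  · exact (ContinuousOn.div hq.continuousOn hf hne).aestronglyMeasurable measurableSet_Ioo
  · refine (MeasureTheory.ae_restrict_iff' measurableSet_Ioo).mpr (Eventually.of_forall ?_)
    intro x hx
    have hxI : x ∈ Set.Icc β α := ⟨hx.1.le, hx.2.le⟩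
    have hu := sub_pos.mpr hx.1
    have hv := sub_pos.mpr hx.2
    have hL := sub_pos.mpr h
    have hQx : |Q x0| ≤ |Q x| := hmin hxI
    have hqx : |q x| ≤ |q x1| := hmax hxI
    rw [Real.norm_eq_abs, abs_div, div_eq_mul_inv |q x|, div_mul_eq_mul_div, mul_div_assoc]
    refine mul_le_mul hqx ?_ (by positivity) (abs_nonneg _)
    rw [Real.rpow_neg hu.le, Real.rpow_neg hv.le, ← Real.sqrt_eq_rpow, ← Real.sqrt_eq_rpow]
    have hfa : |f x| = √(x - β) * √(α - x) * √|Q x| := by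
      rw [← Real.sqrt_sq_eq_abs, hfQ x hx, Real.sqrt_mul (by positivity), Real.sqrt_mul hu.le]
    have hsu : 0 < √(x - β) := Real.sqrt_pos.mpr hu
    have hsv : 0 < √(α - x) := Real.sqrt_pos.mpr hv
    have hsm : 0 < √|Q x0| := Real.sqrt_pos.mpr hm
    have hsL : 0 < √(α - β) := Real.sqrt_pos.mpr hL
    have hsq : √|Q x0| ≤ √|Q x| := Real.sqrt_le_sqrt hQx
    have hadd : √(α - β) ≤ √(x - β) + √(α - x) := by
      rw [Real.sqrt_le_left (by positivity)]
      nlinarith [Real.sq_sqrt hu.le, Real.sq_sqrt hv.le, mul_pos hsu hsv]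
    rw [hfa, Real.sqrt_mul hm.le]
    calc (√(x - β) * √(α - x) * √|Q x|)⁻¹ ≤ (√(x - β) * √(α - x) * √|Q x0|)⁻¹ := by gcongr
      _ = √(α - β) / (√(x - β) * √(α - x) * (√|Q x0| * √(α - β))) := by
        field_simp
      _ ≤ (√(x - β) + √(α - x)) / (√(x - β) * √(α - x) * (√|Q x0| * √(α - β))) := by gcongr
      _ = _ := by field_simp; ring

lemma aux_order (g : ℕ) (a b : ℕ → ℝ)
    (hord : ∀ j ∈ Finset.Icc 1 g, a j < b j ∧ b j < a (j + 1))
    (i j : ℕ) (hi : 1 ≤ i) (hij : i < j) (hj : j ≤ g + 1) : b i < a j := by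
  induction j, hij using Nat.le_induction with
  | base => exact (hord i (Finset.mem_Icc.mpr ⟨hi, by omega⟩)).2
  | succ n hn ih =>
    have h1 := ih (by omega)
    have h2 := hord n (Finset.mem_Icc.mpr ⟨by omega, by omega⟩)
    linarith [h2.1, h2.2]

/-- Factorisation of the polynomial at a gap. -/
lemma aux_fact (g : ℕ) (a b : ℕ → ℝ)
    (hord : ∀ j ∈ Finset.Icc 1 g, a j < b j ∧ b j < a (j + 1))
    (j : ℕ) (hj1 : 1 ≤ j) (hjg : j ≤ g) :
    ∃ Q : ℝ → ℝ, Continuous Q ∧ (∀ x ∈ Set.Icc (b j) (a (j + 1)), Q x ≠ 0) ∧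
      ∀ x : ℝ, (x - a (g + 1)) * ∏ i ∈ Finset.Icc 1 g, ((x - a i) * (x - b i))
        = (x - b j) * (x - a (j + 1)) * Q x := by
  refine ⟨fun x => (∏ i ∈ (Finset.Icc 1 (g + 1)).erase (j + 1), (x - a i)) *
    ∏ i ∈ (Finset.Icc 1 g).erase j, (x - b i), by fun_prop, ?_, ?_⟩
  · intro x hx
    have hj := hord j (Finset.mem_Icc.mpr ⟨hj1, hjg⟩)
    refine mul_ne_zero (Finset.prod_ne_zero_iff.mpr ?_) (Finset.prod_ne_zero_iff.mpr ?_)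
    · intro i hi
      simp only [Finset.mem_erase, Finset.mem_Icc] at hi
      rcases lt_trichotomy i j with h | h | h
      · have h1 := aux_order g a b hord i j hi.2.1 h (by omega)
        have h2 := hord i (Finset.mem_Icc.mpr ⟨hi.2.1, by omega⟩)
        have := hx.1
        apply ne_of_gt; linarith [h2.1]
      · subst h
        have := hx.1
        apply ne_of_gt; linarith [hj.1]
      · have h1 := aux_order g a b hord (j + 1) i (by omega) (by omega) (by omega)
        have h2 := hord (j + 1) (Finset.mem_Icc.mpr ⟨by omega, by omega⟩)
        have := hx.2
        apply ne_of_lt; linarith [h2.1]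
    · intro i hi
      simp only [Finset.mem_erase, Finset.mem_Icc] at hi
      have h2 := hord i (Finset.mem_Icc.mpr ⟨hi.2.1, by omega⟩)
      rcases lt_or_gt_of_ne hi.1 with h | h
      · have h1 := aux_order g a b hord i j hi.2.1 h (by omega)
        have := hx.1
        apply ne_of_gt; linarith [hj.1]
      · have := hx.2
        apply ne_of_lt
        rcases (show i = j + 1 ∨ j + 1 < i by omega) with h3 | h3
        · subst h3; linarith [h2.1]
        · have h1 := aux_order g a b hord (j + 1) i (by omega) h3 (by omega)
          have h4 := hord (j + 1) (Finset.mem_Icc.mpr ⟨by omega, by omega⟩)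
          linarith [h2.1, h4.1]
  · intro x
    have e1 := Finset.mul_prod_erase (Finset.Icc 1 (g + 1)) (fun i => x - a i)
      (a := j + 1) (Finset.mem_Icc.mpr ⟨by omega, by omega⟩)
    have e2 := Finset.mul_prod_erase (Finset.Icc 1 g) (fun i => x - b i)
      (a := j) (Finset.mem_Icc.mpr ⟨by omega, by omega⟩)
    rw [Finset.prod_Icc_succ_top (by omega)] at e1
    rw [Finset.prod_mul_distrib]
    simp only at e1 e2 ⊢
    rw [← e2]
    linear_combination (-((x - b j) * ∏ i ∈ (Finset.Icc 1 g).erase j, (x - b i))) * e1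

/-- A gap is disjoint from the bands. -/
lemma aux_gap (g : ℕ) (a b : ℕ → ℝ)
    (hord : ∀ j ∈ Finset.Icc 1 g, a j < b j ∧ b j < a (j + 1))
    (j : ℕ) (hj1 : 1 ≤ j) (hjg : j ≤ g) (x : ℝ) (hx : x ∈ Set.Ioo (b j) (a (j + 1))) :
    x ∉ Set.Ici (a (g + 1)) ∪ ⋃ j ∈ Finset.Icc 1 g, Set.Icc (a j) (b j) := by
  intro h
  have mono : ∀ i, j + 1 ≤ i → i ≤ g + 1 → a (j + 1) ≤ a i := by
    intro i h1 h2
    rcases h1.eq_or_lt with h3 | h3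
    · rw [h3]
    · have h4 := aux_order g a b hord (j + 1) i (by omega) h3 h2
      have h5 := hord (j + 1) (Finset.mem_Icc.mpr ⟨by omega, by omega⟩)
      linarith [h5.1]
  rcases h with h | h
  · have := mono (g + 1) (by omega) le_rfl
    have h' : a (g + 1) ≤ x := h
    linarith [hx.2]
  · simp only [Set.mem_iUnion] at h
    obtain ⟨i, hi, hxi⟩ := h
    have hi' := Finset.mem_Icc.mp hi
    rcases (show i < j ∨ i = j ∨ j + 1 ≤ i by omega) with h1 | h1 | h1
    · have := aux_order g a b hord i j hi'.1 h1 (by omega)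
      have h2 := hord j (Finset.mem_Icc.mpr ⟨hj1, hjg⟩)
      linarith [hx.1, hxi.2, h2.1]
    · subst h1; linarith [hx.1, hxi.2]
    · linarith [mono i h1 (by omega), hx.2, hxi.1]

lemma aux_det (g : ℕ) (l u : Fin g → ℝ) (hlu : ∀ j, l j < u j)
    (hdisj : ∀ i j, i < j → u i ≤ l j)
    (s : ℝ → ℝ) (hs : ∀ j, ContinuousOn s (Set.Ioo (l j) (u j)))
    (hs0 : ∀ j, ∀ x ∈ Set.Ioo (l j) (u j), s x ≠ 0)
    (hint : ∀ j, ∀ q : ℝ → ℝ, Continuous q →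
      IntervalIntegrable (fun x => q x / s x) MeasureTheory.volume (l j) (u j)) :
    (Matrix.of fun k j : Fin g => ∫ x in (l j)..(u j), x ^ (k : ℕ) / s x).det ≠ 0 := by
  intro hdet
  obtain ⟨v, hv, hvA⟩ := Matrix.exists_vecMul_eq_zero_iff.mpr hdet
  set p : Polynomial ℝ := ∑ k : Fin g, Polynomial.monomial (k : ℕ) (v k) with hp
  have heval : ∀ x, p.eval x = ∑ k : Fin g, v k * x ^ (k : ℕ) := by
    intro x; simp [hp, Polynomial.eval_finset_sum]
  have hz : ∀ j, ∃ x ∈ Set.Ioo (l j) (u j), p.eval x = 0 := by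
    intro j
    have h1 := congrFun hvA j
    simp only [Matrix.vecMul, dotProduct, Matrix.of_apply, Pi.zero_apply] at h1
    have h2 : ∫ x in (l j)..(u j), p.eval x / s x = 0 := by
      rw [← h1]
      simp_rw [← intervalIntegral.integral_const_mul]
      rw [← intervalIntegral.integral_finset_sum]
      · congr 1; ext x
        rw [heval, Finset.sum_div]
        exact Finset.sum_congr rfl fun k _ => by ring
      · intro k _
        exact (hint j _ (continuous_pow (k : ℕ))).const_mul _
    obtain ⟨x, hx, hx0⟩ := aux_zero (hlu j) (fun x => p.eval x / s x)
      (p.continuous.continuousOn.div (hs j) (hs0 j)) (hint j _ p.continuous) h2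
    refine ⟨x, hx, ?_⟩
    rcases div_eq_zero_iff.mp hx0 with h | h
    · exact h
    · exact absurd h (hs0 j x hx)
  choose z hz hz0 using hz
  have hmono : StrictMono z := fun i j hij => by
    linarith [(hz i).2, (hz j).1, hdisj i j hij]
  have hg : 0 < g := by
    by_contra h0
    have : g = 0 := by omega
    subst this
    exact hv (Subsingleton.elim _ _)
  have hp0 : p = 0 := by
    apply Polynomial.eq_zero_of_natDegree_lt_card_of_eval_eq_zero p hmono.injective hz0
    rw [Fintype.card_fin]
    refine lt_of_le_of_lt (Polynomial.natDegree_sum_le_of_forall_le (n := g - 1) _ _ ?_)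
      (by omega)
    intro k _
    exact (Polynomial.natDegree_monomial_le _).trans (by have := k.2; omega)
  apply hv
  ext k
  have := congrArg (fun q => Polynomial.coeff q (k : ℕ)) hp0
  simpa [hp, Polynomial.finset_sum_coeff, Polynomial.coeff_monomial, Fin.val_inj] using this

lemma aux_conv (R : ℂ → ℂ) {β α : ℝ} (h : β < α)
    (hre : ∀ x ∈ Set.Ioo β α, (R (x : ℂ)).re = 0) (q : ℝ → ℝ) (F : ℝ → ℂ)
    (hF : ∀ x : ℝ, F x = (q x : ℂ) / R (x : ℂ)) :
    ∫ x in β..α, F x = -I * ((∫ x in β..α, q x / (R (x : ℂ)).im : ℝ) : ℂ) := by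
  rw [← intervalIntegral.integral_ofReal, ← intervalIntegral.integral_const_mul,
    intervalIntegral.integral_of_le h.le, intervalIntegral.integral_of_le h.le,
    MeasureTheory.integral_Ioc_eq_integral_Ioo, MeasureTheory.integral_Ioc_eq_integral_Ioo]
  refine MeasureTheory.setIntegral_congr_fun measurableSet_Ioo ?_
  intro x hx
  have e : R (x : ℂ) = ((R (x : ℂ)).im : ℂ) * I := by
    apply Complex.ext <;> simp [hre x hx]
  simp only [hF]
  rw [e]
  generalize (R (x : ℂ)).im = y
  push_cast
  rw [div_mul_eq_div_div, div_I]
  simp; ring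

/-- Assume `α₁ = 0`, fix `x, t ∈ ℝ`, and set `θ⁺(ζ) = √ζ (x + 4ζt)` for
`ζ > 0`.  With `R` the usual square root of `P` on `ℂ ∖ σ_B`, the linear system
`∑_j Ω_j ∫_{β_j}^{α_{j+1}} ζ^{k-1}/R dζ = ∑_j ∫_{β_j}^{α_{j+1}} 2θ⁺(ζ) ζ^{k-1}/R dζ`
(`k = 1, …, g`) has a unique solution `(Ω₁, …, Ω_g) ∈ ℂ^g`, and every `Ω_j` is real. -/
theorem stmt_9
    (g : ℕ) (hg : 1 ≤ g) (a b : ℕ → ℝ)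
    (ha1 : a 1 = 0)
    (hord : ∀ j ∈ Finset.Icc 1 g, a j < b j ∧ b j < a (j + 1))
    (P : ℂ → ℂ)
    (hP : ∀ z : ℂ, P z = (z - (a (g + 1) : ℂ)) *
      ∏ j ∈ Finset.Icc 1 g, ((z - (a j : ℂ)) * (z - (b j : ℂ))))
    (σB : Set ℝ)
    (hσB : σB = Set.Ici (a (g + 1)) ∪ ⋃ j ∈ Finset.Icc 1 g, Set.Icc (a j) (b j))
    (Ω : Set ℂ) (hΩ : Ω = {z : ℂ | ¬(z.im = 0 ∧ z.re ∈ σB)})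
    (R : ℂ → ℂ)
    (hRanal : DifferentiableOn ℂ R Ω)
    (hRsq : ∀ z ∈ Ω, R z ^ 2 = P z)
    (hRasym : Tendsto (fun x : ℝ => R (x : ℂ) / (((|x| ^ ((g : ℝ) + 1/2) : ℝ)) : ℂ))
      atBot (nhds ((-1 : ℂ) ^ g * Complex.I)))
    (hRgap : ∀ j ∈ Finset.Icc 1 g, ∀ x ∈ Set.Ioo (b j) (a (j + 1)),
      (R (x : ℂ)).re = 0 ∧ R (x : ℂ) ≠ 0)
    (x t : ℝ) :
    (∃! Ωv : Fin g → ℂ, ∀ k : Fin g,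
      ∑ j : Fin g, Ωv j *
          ∫ ζ in (b ((j : ℕ) + 1))..(a ((j : ℕ) + 2)), (ζ : ℂ) ^ (k : ℕ) / R (ζ : ℂ)
        = ∑ j : Fin g,
          ∫ ζ in (b ((j : ℕ) + 1))..(a ((j : ℕ) + 2)),
            2 * ((Real.sqrt ζ * (x + 4 * ζ * t) : ℝ) : ℂ) * (ζ : ℂ) ^ (k : ℕ) / R (ζ : ℂ)) ∧
    (∀ Ωv : Fin g → ℂ,
      (∀ k : Fin g,
        ∑ j : Fin g, Ωv j *
            ∫ ζ in (b ((j : ℕ) + 1))..(a ((j : ℕ) + 2)), (ζ : ℂ) ^ (k : ℕ) / R (ζ : ℂ)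
          = ∑ j : Fin g,
            ∫ ζ in (b ((j : ℕ) + 1))..(a ((j : ℕ) + 2)),
              2 * ((Real.sqrt ζ * (x + 4 * ζ * t) : ℝ) : ℂ) * (ζ : ℂ) ^ (k : ℕ) / R (ζ : ℂ)) →
      ∀ j : Fin g, (Ωv j).im = 0) := by
  set l : Fin g → ℝ := fun j => b ((j : ℕ) + 1) with hl
  set u : Fin g → ℝ := fun j => a ((j : ℕ) + 2) with hu
  set s : ℝ → ℝ := fun y => (R (y : ℂ)).im with hs
  have hmem : ∀ j : Fin g, (j : ℕ) + 1 ∈ Finset.Icc 1 g := fun j =>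
    Finset.mem_Icc.mpr ⟨by omega, by have := j.2; omega⟩
  have hlu : ∀ j, l j < u j := fun j => (hord _ (hmem j)).2
  have hgapΩ : ∀ j, ∀ y ∈ Set.Ioo (l j) (u j), (y : ℂ) ∈ Ω := by
    intro j y hy
    rw [hΩ, hσB]
    intro hc
    exact aux_gap g a b hord ((j : ℕ) + 1) (by omega) (by have := j.2; omega) y hy
      (by simpa using hc.2)
  have hre : ∀ j, ∀ y ∈ Set.Ioo (l j) (u j), (R (y : ℂ)).re = 0 :=
    fun j y hy => (hRgap _ (hmem j) y hy).1
  have hs0 : ∀ j, ∀ y ∈ Set.Ioo (l j) (u j), s y ≠ 0 := by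
    intro j y hy h0
    exact (hRgap _ (hmem j) y hy).2 (Complex.ext (hre j y hy) h0)
  have hsc : ∀ j, ContinuousOn s (Set.Ioo (l j) (u j)) := by
    intro j
    refine Complex.continuous_im.comp_continuousOn ?_
    exact hRanal.continuousOn.comp Complex.continuous_ofReal.continuousOn (hgapΩ j)
  have hint : ∀ j, ∀ q : ℝ → ℝ, Continuous q →
      IntervalIntegrable (fun y => q y / s y) MeasureTheory.volume (l j) (u j) := by
    intro j q hq
    obtain ⟨Q, hQc, hQ0, hQ⟩ := aux_fact g a b hord ((j : ℕ) + 1) (by omega)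
      (by have := j.2; omega)
    refine aux_int (hlu j) s (hsc j) Q hQc hQ0 ?_ q hq
    intro y hy
    have e1 := hRsq _ (hgapΩ j y hy)
    have e2 : P (y : ℂ) = (((y - l j) * (y - u j) * Q y : ℝ) : ℂ) := by
      rw [hP]
      have := hQ y
      rw [show (y - l j) * (y - u j) * Q y = _ from this.symm]
      push_cast
      rfl
    have e : R (y : ℂ) = (s y : ℂ) * I := by
      apply Complex.ext <;> simp [hre j y hy, hs]
    rw [e, e2, mul_pow, I_sq] at e1
    have e3 : -(s y) ^ 2 = (y - l j) * (y - u j) * Q y := by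
      have : ((-(s y) ^ 2 : ℝ) : ℂ) = (((y - l j) * (y - u j) * Q y : ℝ) : ℂ) := by
        rw [← e1]; push_cast; ring
      exact_mod_cast this
    have e4 : (s y) ^ 2 = (y - l j) * (u j - y) * Q y := by linarith
    have hp : 0 < (y - l j) * (u j - y) := mul_pos (sub_pos.mpr hy.1) (sub_pos.mpr hy.2)
    have hQn : 0 ≤ Q y := by
      by_contra hneg
      push Not at hneg
      nlinarith [sq_nonneg (s y), mul_neg_of_pos_of_neg hp hneg]
    rw [e4, abs_of_nonneg hQn]
  have hdisj : ∀ i j, i < j → u i ≤ l j := by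
    intro i j hij
    have hij' : (i : ℕ) < j := hij
    have hj := (hord _ (hmem j)).1
    rcases (show (i : ℕ) + 1 = j ∨ (i : ℕ) + 2 < j + 1 by omega) with h | h
    · simp only [hu, hl]
      rw [← h] at hj ⊢
      exact hj.le
    · have h1 := aux_order g a b hord ((i : ℕ) + 2) ((j : ℕ) + 1) (by omega) h
        (by have := j.2; omega)
      have h2 := hord ((i : ℕ) + 2) (Finset.mem_Icc.mpr ⟨by omega, by have := j.2; omega⟩)
      simp only [hu, hl]
      linarith [h2.1]
  have hdet := aux_det g l u hlu hdisj s hsc hs0 hint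
  obtain ⟨w, hw⟩ := aux_lin _ hdet (fun k => ∑ j : Fin g, ∫ ζ in (l j)..(u j),
    (2 * (Real.sqrt ζ * (x + 4 * ζ * t)) * ζ ^ (k : ℕ)) / s ζ)
  have key : ∀ v : Fin g → ℂ, (∀ k : Fin g,
      ∑ j : Fin g, v j *
          ∫ ζ in (b ((j : ℕ) + 1))..(a ((j : ℕ) + 2)), (ζ : ℂ) ^ (k : ℕ) / R (ζ : ℂ)
        = ∑ j : Fin g,
          ∫ ζ in (b ((j : ℕ) + 1))..(a ((j : ℕ) + 2)),
            2 * ((Real.sqrt ζ * (x + 4 * ζ * t) : ℝ) : ℂ) * (ζ : ℂ) ^ (k : ℕ) / R (ζ : ℂ)) ↔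
      v = fun j => (w j : ℂ) := by
    intro v
    rw [← hw v]
    refine forall_congr' fun k => ?_
    have hL : ∑ j : Fin g, v j *
          ∫ ζ in (b ((j : ℕ) + 1))..(a ((j : ℕ) + 2)), (ζ : ℂ) ^ (k : ℕ) / R (ζ : ℂ)
        = -I * ∑ j : Fin g, v j * ((∫ ζ in (l j)..(u j), ζ ^ (k : ℕ) / s ζ : ℝ) : ℂ) := by
      rw [Finset.mul_sum]
      refine Finset.sum_congr rfl fun j _ => ?_
      rw [aux_conv R (hlu j) (hre j) (fun ζ => ζ ^ (k : ℕ)) _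
        (fun ζ => by push_cast; rfl)]
      ring
    have hRr : ∑ j : Fin g,
          ∫ ζ in (b ((j : ℕ) + 1))..(a ((j : ℕ) + 2)),
            2 * ((Real.sqrt ζ * (x + 4 * ζ * t) : ℝ) : ℂ) * (ζ : ℂ) ^ (k : ℕ) / R (ζ : ℂ)
        = -I * ((∑ j : Fin g, ∫ ζ in (l j)..(u j),
            (2 * (Real.sqrt ζ * (x + 4 * ζ * t)) * ζ ^ (k : ℕ)) / s ζ : ℝ) : ℂ) := by
      rw [Complex.ofReal_sum, Finset.mul_sum]
      refine Finset.sum_congr rfl fun j _ => ?_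
      rw [aux_conv R (hlu j) (hre j)
        (fun ζ => 2 * (Real.sqrt ζ * (x + 4 * ζ * t)) * ζ ^ (k : ℕ)) _
        (fun ζ => by push_cast; rfl)]
    rw [hL, hRr, mul_right_inj' (neg_ne_zero.mpr I_ne_zero)]
    rfl
  refine ⟨⟨fun j => (w j : ℂ), (key _).mpr rfl, fun v hv => (key v).mp hv⟩, ?_⟩
  intro v hv j
  rw [(key v).mp hv]
  simp
end

section
/- Fix x, t ∈ ℝ and arbitrary real constants Ω₁, …, Ω_g, and define G(λ) = (R(λ)/(2πi)) Σ_{j=1}^{g} ∫_{β_j}^{α_{j+1}} (Ω_j − 2θ⁺(ζ; x, t)) / ( R(ζ)(ζ − λ) ) dζ. Then G is analytic on ℂ∖[0, ∞); for λ in any open band (α_j, β_j) or in (α_{g+1}, ∞), the boundary values G^±(λ) = lim_{ε↓0} G(λ ± iε) exist continuously and satisfy G⁺(λ) + G⁻(λ) = 0; and for λ in the open gap (β_j, α_{j+1}) the boundary values exist continuously and satisfy G⁺(λ) − G⁻(λ) + 2θ⁺(λ; x, t) = Ω_j. -/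
open Complex Filter

/-- The Cauchy transform is holomorphic off the contour. -/
lemma cauchy_diff (p q : ℝ) (hpq : p ≤ q) (f : ℝ → ℂ)
    (hf : IntervalIntegrable f MeasureTheory.volume p q) (z₀ : ℂ)
    (hz : ∀ ζ ∈ Set.Icc p q, (ζ : ℂ) ≠ z₀) :
    DifferentiableAt ℂ (fun z => ∫ ζ in p..q, f ζ / ((ζ : ℂ) - z)) z₀ := by
  have hcl : IsCompact ((fun ζ : ℝ => (ζ : ℂ)) '' Set.Icc p q) :=
    isCompact_Icc.image continuous_ofReal
  have hnot : z₀ ∈ ((fun ζ : ℝ => (ζ : ℂ)) '' Set.Icc p q)ᶜ := by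
    rintro ⟨ζ, h1, h2⟩
    exact hz ζ h1 h2
  obtain ⟨r, hr, hball⟩ := Metric.isOpen_iff.1 hcl.isClosed.isOpen_compl z₀ hnot
  have hdist : ∀ ζ ∈ Set.Icc p q, r ≤ ‖(ζ : ℂ) - z₀‖ := by
    intro ζ hζ
    by_contra! h
    exact hball (by simpa [Metric.mem_ball, dist_eq_norm] using h) ⟨ζ, hζ, rfl⟩
  have hdist2 : ∀ z ∈ Metric.ball z₀ (r / 2), ∀ ζ ∈ Set.Icc p q, r / 2 ≤ ‖(ζ : ℂ) - z‖ := by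
    intro z hz ζ hζ
    have h1 := hdist ζ hζ
    rw [Metric.mem_ball, dist_eq_norm] at hz
    have h2 : ‖(ζ : ℂ) - z₀‖ ≤ ‖(ζ : ℂ) - z‖ + ‖z - z₀‖ := by
      simpa using norm_add_le ((ζ : ℂ) - z) (z - z₀)
    linarith
  have hne : ∀ z ∈ Metric.ball z₀ (r / 2), ∀ ζ ∈ Set.Icc p q, (ζ : ℂ) - z ≠ 0 := by
    intro z hz ζ hζ h
    have := hdist2 z hz ζ hζ
    rw [h, norm_zero] at this
    linarith
  have hsub : Set.uIoc p q ⊆ Set.Icc p q := by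
    rw [Set.uIoc_of_le hpq]; exact Set.Ioc_subset_Icc_self
  have hint : ∀ z ∈ Metric.ball z₀ (r / 2),
      IntervalIntegrable (fun ζ : ℝ => f ζ / ((ζ : ℂ) - z)) MeasureTheory.volume p q := by
    intro z hz
    simp_rw [div_eq_mul_inv]
    apply hf.mul_continuousOn
    rw [Set.uIcc_of_le hpq]
    exact ContinuousOn.inv₀ (by fun_prop) (hne z hz)
  have hint2 : IntervalIntegrable (fun ζ : ℝ => f ζ / ((ζ : ℂ) - z₀) ^ 2)
      MeasureTheory.volume p q := by
    simp_rw [div_eq_mul_inv]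
    apply hf.mul_continuousOn
    rw [Set.uIcc_of_le hpq]
    refine ContinuousOn.inv₀ (by fun_prop) fun ζ hζ => pow_ne_zero 2 (hne z₀ ?_ ζ hζ)
    exact Metric.mem_ball_self (by linarith)
  have hr2 : 0 < r / 2 := by linarith
  refine (intervalIntegral.hasDerivAt_integral_of_dominated_loc_of_deriv_le
    (F := fun z ζ => f ζ / ((ζ : ℂ) - z)) (F' := fun z ζ => f ζ / ((ζ : ℂ) - z) ^ 2)
    (bound := fun ζ => ‖f ζ‖ * ((r / 2) ^ 2)⁻¹)
    (Metric.ball_mem_nhds z₀ hr2) ?_ (hint z₀ (Metric.mem_ball_self hr2))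
    ?_ ?_ ?_ ?_).2.differentiableAt
  · filter_upwards [Metric.ball_mem_nhds z₀ hr2] with z hz
    exact (hint z hz).def'.aestronglyMeasurable
  · exact hint2.def'.aestronglyMeasurable
  · refine MeasureTheory.ae_of_all _ fun ζ hζ z hz => ?_
    rw [norm_div, norm_pow, div_eq_mul_inv]
    gcongr
    exact hdist2 z hz ζ (hsub hζ)
  · exact hf.norm.mul_const _
  · refine MeasureTheory.ae_of_all _ fun ζ hζ z hz => ?_
    have h0 := hne z hz ζ (hsub hζ)
    have h1 : HasDerivAt (fun z : ℂ => (ζ : ℂ) - z) (-1) z := by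
      simpa using (hasDerivAt_id z).const_sub (ζ : ℂ)
    have := (hasDerivAt_const z (f ζ)).fun_div h1 h0
    refine this.congr_deriv ?_
    simp

/-- Integral of `1/(ζ - z)`. -/
lemma int_log (c d : ℝ) (z : ℂ) (hz : z.im ≠ 0) :
    ∫ ζ in c..d, 1 / ((ζ : ℂ) - z) = Complex.log (d - z) - Complex.log (c - z) := by
  have hs : ∀ ζ : ℝ, (ζ : ℂ) - z ∈ slitPlane := by
    intro ζ
    right
    simpa using hz
  apply intervalIntegral.integral_eq_sub_of_hasDerivAt (f := fun ζ : ℝ => Complex.log (ζ - z))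
  · intro ζ _
    have h1 : HasDerivAt (fun ζ : ℝ => (ζ : ℂ) - z) 1 ζ := (by simpa using (hasDerivAt_id ζ).ofReal_comp : HasDerivAt (fun ζ : ℝ => (ζ : ℂ)) 1 ζ).sub_const z
    exact h1.clog_real (hs ζ)
  · apply Continuous.intervalIntegrable
    exact continuous_const.div (by fun_prop) fun ζ => slitPlane_ne_zero (hs ζ)

/-- Boundary behaviour of the logarithm from the upper side. -/
lemma log_up (c d x₀ : ℝ) (hc : c < x₀) (hd : x₀ < d) :
    Tendsto (fun z : ℂ => Complex.log (d - z) - Complex.log (c - z))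
      (nhdsWithin (x₀ : ℂ) {z | 0 < z.im})
      (nhds (Real.log (d - x₀) - Real.log (x₀ - c) + Real.pi * I)) ∧
    Tendsto (fun z : ℂ => Complex.log (d - z) - Complex.log (c - z))
      (nhdsWithin (x₀ : ℂ) {z | z.im < 0})
      (nhds (Real.log (d - x₀) - Real.log (x₀ - c) - Real.pi * I)) := by
  have h1 : Tendsto (fun z : ℂ => Complex.log (d - z)) (nhds (x₀ : ℂ))
      (nhds (Real.log (d - x₀) : ℂ)) := by
    have : ContinuousAt (fun z : ℂ => Complex.log (d - z)) (x₀ : ℂ) := by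
      apply ContinuousAt.clog (by fun_prop)
      left; simpa using hd
    have h2 := this.tendsto
    rwa [← ofReal_sub, ← ofReal_log (by linarith)] at h2
  have hre : ((c : ℂ) - x₀).re < 0 := by simpa using hc
  have him : ((c : ℂ) - x₀).im = 0 := by simp
  have hnorm : ‖(c : ℂ) - x₀‖ = x₀ - c := by
    rw [← ofReal_sub, norm_real, Real.norm_eq_abs, abs_of_neg (by linarith)]; ring
  have hsub : Tendsto (fun z : ℂ => (c : ℂ) - z) (nhds (x₀ : ℂ)) (nhds ((c : ℂ) - x₀)) := by
    have : Continuous (fun z : ℂ => (c : ℂ) - z) := by fun_prop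
    exact this.tendsto _
  constructor
  · have h3 := tendsto_log_nhdsWithin_im_neg_of_re_neg_of_im_zero hre him
    rw [hnorm] at h3
    have h4 : Tendsto (fun z : ℂ => (c : ℂ) - z) (nhdsWithin (x₀ : ℂ) {z | 0 < z.im})
        (nhdsWithin ((c : ℂ) - x₀) {z | z.im < 0}) := by
      apply tendsto_nhdsWithin_of_tendsto_nhds_of_eventually_within _
        (hsub.mono_left nhdsWithin_le_nhds)
      filter_upwards [self_mem_nhdsWithin] with z hz
      simpa using hz
    have h5 := (h1.mono_left nhdsWithin_le_nhds).sub (h3.comp h4)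
    refine h5.trans_eq ?_
    congr 1
    ring
  · have h3 : Tendsto Complex.log (nhdsWithin ((c : ℂ) - x₀) {z | 0 ≤ z.im}) _ :=
      tendsto_log_nhdsWithin_im_nonneg_of_re_neg_of_im_zero hre him
    rw [hnorm] at h3
    have h4 : Tendsto (fun z : ℂ => (c : ℂ) - z) (nhdsWithin (x₀ : ℂ) {z | z.im < 0})
        (nhdsWithin ((c : ℂ) - x₀) {z | 0 ≤ z.im}) := by
      apply tendsto_nhdsWithin_of_tendsto_nhds_of_eventually_within _
        (hsub.mono_left nhdsWithin_le_nhds)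
      filter_upwards [self_mem_nhdsWithin] with z hz
      have : z.im < 0 := hz
      simpa using this.le
    have h5 := (h1.mono_left nhdsWithin_le_nhds).sub (h3.comp h4)
    refine h5.trans_eq ?_
    congr 1
    ring

/-- Sokhotski–Plemelj at an interior point where the density is `C¹`. -/
lemma plemelj (p q x₀ : ℝ) (hp : p < x₀) (hq : x₀ < q) (f : ℝ → ℂ)
    (hf : IntervalIntegrable f MeasureTheory.volume p q) (hC : ContDiffAt ℝ 1 f x₀) :
    ∃ L : ℂ,
      Tendsto (fun z : ℂ => ∫ ζ in p..q, f ζ / ((ζ : ℂ) - z))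
        (nhdsWithin (x₀ : ℂ) {z | 0 < z.im}) (nhds (L + Real.pi * I * f x₀)) ∧
      Tendsto (fun z : ℂ => ∫ ζ in p..q, f ζ / ((ζ : ℂ) - z))
        (nhdsWithin (x₀ : ℂ) {z | z.im < 0}) (nhds (L - Real.pi * I * f x₀)) := by
  obtain ⟨K, s, hs, hK⟩ := hC.exists_lipschitzOnWith
  obtain ⟨ρ, hρ, hball⟩ := Metric.mem_nhds_iff.1 hs
  obtain ⟨r, hr, hrρ, hrp, hrq⟩ : ∃ r : ℝ, 0 < r ∧ r < ρ ∧ p < x₀ - r ∧ x₀ + r < q := by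
    refine ⟨min (ρ / 2) (min ((x₀ - p) / 2) ((q - x₀) / 2)), ?_, ?_, ?_, ?_⟩
    · refine lt_min (by linarith) (lt_min (by linarith) (by linarith))
    · have := min_le_left (ρ / 2) (min ((x₀ - p) / 2) ((q - x₀) / 2)); linarith
    · have := min_le_right (ρ / 2) (min ((x₀ - p) / 2) ((q - x₀) / 2))
      have := min_le_left ((x₀ - p) / 2) ((q - x₀) / 2)
      linarith
    · have := min_le_right (ρ / 2) (min ((x₀ - p) / 2) ((q - x₀) / 2))
      have := min_le_right ((x₀ - p) / 2) ((q - x₀) / 2)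
      linarith
  set c := x₀ - r with hc
  set d := x₀ + r with hd
  have hin : ∀ ζ ∈ Set.Icc c d, ζ ∈ s := by
    intro ζ hζ
    apply hball
    rw [Metric.mem_ball, Real.dist_eq, abs_lt]
    constructor <;> linarith [hζ.1, hζ.2]
  have hlip : ∀ u ∈ Set.Icc c d, ∀ v ∈ Set.Icc c d, ‖f u - f v‖ ≤ K * |u - v| := by
    intro u hu v hv
    have := hK.dist_le_mul u (hin u hu) v (hin v hv)
    rwa [dist_eq_norm, Real.dist_eq] at this
  have hcont : ContinuousOn f (Set.Icc c d) := hK.continuousOn.mono hin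
  have hi1 : IntervalIntegrable f MeasureTheory.volume p c :=
    hf.mono_set (by rw [Set.uIcc_of_le (by linarith), Set.uIcc_of_le (by linarith)]
                    exact Set.Icc_subset_Icc le_rfl (by linarith))
  have hi3 : IntervalIntegrable f MeasureTheory.volume d q :=
    hf.mono_set (by rw [Set.uIcc_of_le (by linarith), Set.uIcc_of_le (by linarith)]
                    exact Set.Icc_subset_Icc (by linarith) le_rfl)
  have hi2 : IntervalIntegrable f MeasureTheory.volume c d :=
    hf.mono_set (by rw [Set.uIcc_of_le (by linarith), Set.uIcc_of_le (by linarith)]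
                    exact Set.Icc_subset_Icc (by linarith) (by linarith))
  have hD1 : Tendsto _ _ _ := (cauchy_diff p c (by linarith) f hi1 x₀ (by
    intro ζ hζ h
    have : ζ = x₀ := by exact_mod_cast h
    linarith [hζ.2])).continuousAt
  have hD3 : Tendsto _ _ _ := (cauchy_diff d q (by linarith) f hi3 x₀ (by
    intro ζ hζ h
    have : ζ = x₀ := by exact_mod_cast h
    linarith [hζ.1])).continuousAt
  -- the regularised inner part
  have hinner : Tendsto (fun z : ℂ => ∫ ζ in c..d, (f ζ - f z.re) / ((ζ : ℂ) - z))
      (nhdsWithin (x₀ : ℂ) {z | z.im ≠ 0})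
      (nhds (∫ ζ in c..d, (f ζ - f x₀) / ((ζ : ℂ) - x₀))) := by
    have hre : ∀ᶠ z : ℂ in nhds (x₀ : ℂ), z.re ∈ Set.Icc c d := by
      have : Tendsto Complex.re (nhds (x₀ : ℂ)) (nhds x₀) := by
        simpa using continuous_re.tendsto (x₀ : ℂ)
      exact this (Icc_mem_nhds (by linarith) (by linarith))
    refine intervalIntegral.tendsto_integral_filter_of_dominated_convergence (fun _ => (K : ℝ))
      ?_ ?_ (by simp) ?_
    · filter_upwards [self_mem_nhdsWithin] with z hz
      apply MeasureTheory.AEStronglyMeasurable.mono_set (t := Set.Icc c d)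
      · rw [Set.uIoc_of_le (by linarith)]; exact Set.Ioc_subset_Icc_self
      · apply ContinuousOn.aestronglyMeasurable _ measurableSet_Icc
        refine ContinuousOn.div (hcont.sub continuousOn_const) (by fun_prop) ?_
        intro ζ _ h
        apply hz
        have := congrArg Complex.im h
        simpa using this
    · filter_upwards [nhdsWithin_le_nhds hre] with z hz
      refine MeasureTheory.ae_of_all _ fun ζ hζ => ?_
      rw [Set.uIoc_of_le (by linarith)] at hζ
      have h1 := hlip ζ (Set.Ioc_subset_Icc_self hζ) z.re hz
      have h2 : |ζ - z.re| ≤ ‖(ζ : ℂ) - z‖ := by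
        simpa using abs_re_le_norm ((ζ : ℂ) - z)
      rw [norm_div]
      apply div_le_of_le_mul₀ (norm_nonneg _) K.2
      exact h1.trans (mul_le_mul_of_nonneg_left h2 K.2)
    · have hae : ∀ᵐ ζ : ℝ, ζ ≠ x₀ := by
        simp [MeasureTheory.ae_iff]
      filter_upwards [hae] with ζ hζ _
      have hcf : ContinuousAt (fun z : ℂ => f z.re) (x₀ : ℂ) := by
        apply ContinuousAt.comp (g := f) (f := Complex.re)
        · simpa using hC.continuousAt
        · exact continuous_re.continuousAt
      have : ContinuousAt (fun z : ℂ => (f ζ - f z.re) / ((ζ : ℂ) - z)) (x₀ : ℂ) := by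
        apply ContinuousAt.div (continuousAt_const.sub hcf) (by fun_prop)
        rw [sub_ne_zero]
        exact_mod_cast hζ
      have h := this.tendsto
      simp only [ofReal_re] at h
      exact h.mono_left nhdsWithin_le_nhds
  have hcf : Tendsto (fun z : ℂ => f z.re) (nhds (x₀ : ℂ)) (nhds (f x₀)) := by
    have : ContinuousAt (fun z : ℂ => f z.re) (x₀ : ℂ) := by
      apply ContinuousAt.comp (g := f) (f := Complex.re)
      · simpa using hC.continuousAt
      · exact continuous_re.continuousAt
    simpa using this.tendsto
  -- decomposition
  have hdec : ∀ z : ℂ, z.im ≠ 0 → ∫ ζ in p..q, f ζ / ((ζ : ℂ) - z) =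
      (∫ ζ in p..c, f ζ / ((ζ : ℂ) - z)) + ((∫ ζ in c..d, (f ζ - f z.re) / ((ζ : ℂ) - z)) +
        f z.re * (Complex.log (d - z) - Complex.log (c - z))) +
      (∫ ζ in d..q, f ζ / ((ζ : ℂ) - z)) := by
    intro z hz
    have hne : ∀ ζ : ℝ, (ζ : ℂ) - z ≠ 0 := by
      intro ζ h
      apply hz
      have := congrArg Complex.im h
      simpa using this
    have hcinv : Continuous (fun ζ : ℝ => ((ζ : ℂ) - z)⁻¹) :=
      Continuous.inv₀ (by fun_prop) hne
    have hI : ∀ u v : ℝ, ∀ h : ℝ → ℂ, IntervalIntegrable h MeasureTheory.volume u v →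
        IntervalIntegrable (fun ζ : ℝ => h ζ / ((ζ : ℂ) - z)) MeasureTheory.volume u v := by
      intro u v h hh
      simp_rw [div_eq_mul_inv]
      exact hh.mul_continuousOn hcinv.continuousOn
    rw [← int_log c d z hz, ← intervalIntegral.integral_const_mul,
      ← intervalIntegral.integral_add (hI _ _ _ (hi2.sub (by simp)))
        ((hI _ _ _ (by simp)).const_mul _),
      ← intervalIntegral.integral_add_adjacent_intervals ((hI _ _ _ hi1).trans (hI _ _ _ hi2))
        (hI _ _ _ hi3),
      ← intervalIntegral.integral_add_adjacent_intervals (hI _ _ _ hi1) (hI _ _ _ hi2)]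
    congr 2
    apply intervalIntegral.integral_congr
    intro ζ _
    simp only
    ring
  obtain ⟨hl1, hl2⟩ := log_up c d x₀ (by linarith) (by linarith)
  refine ⟨(∫ ζ in p..c, f ζ / ((ζ : ℂ) - x₀)) + ((∫ ζ in c..d, (f ζ - f x₀) / ((ζ : ℂ) - x₀)) +
        f x₀ * (Real.log (d - x₀) - Real.log (x₀ - c))) +
      (∫ ζ in d..q, f ζ / ((ζ : ℂ) - x₀)), ?_, ?_⟩
  · have hle : nhdsWithin (x₀ : ℂ) {z | 0 < z.im} ≤ nhdsWithin (x₀ : ℂ) {z | z.im ≠ 0} :=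
      nhdsWithin_mono _ fun z (hz : 0 < z.im) => hz.ne'
    have hle' : nhdsWithin (x₀ : ℂ) {z | 0 < z.im} ≤ nhds (x₀ : ℂ) := nhdsWithin_le_nhds
    have := ((hD1.mono_left hle').add ((hinner.mono_left hle).add
      ((hcf.mono_left hle').mul hl1))).add (hD3.mono_left hle')
    refine Tendsto.congr' ?_ (this.trans_eq ?_)
    · filter_upwards [self_mem_nhdsWithin] with z hz
      exact (hdec z (ne_of_gt hz)).symm
    · congr 1; ring
  · have hle : nhdsWithin (x₀ : ℂ) {z | z.im < 0} ≤ nhdsWithin (x₀ : ℂ) {z | z.im ≠ 0} :=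
      nhdsWithin_mono _ fun z (hz : z.im < 0) => hz.ne
    have hle' : nhdsWithin (x₀ : ℂ) {z | z.im < 0} ≤ nhds (x₀ : ℂ) := nhdsWithin_le_nhds
    have := ((hD1.mono_left hle').add ((hinner.mono_left hle).add
      ((hcf.mono_left hle').mul hl2))).add (hD3.mono_left hle')
    refine Tendsto.congr' ?_ (this.trans_eq ?_)
    · filter_upwards [self_mem_nhdsWithin] with z hz
      exact (hdec z (ne_of_lt hz)).symm
    · congr 1; ring


/-- Integrability of a density with inverse square root endpoint singularities. -/
lemma dens_int (p q : ℝ) (hpq : p < q) (N Rr h : ℝ → ℂ) (hN : Continuous N) (hh : Continuous h)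
    (hh0 : ∀ ζ ∈ Set.Icc p q, h ζ ≠ 0) (hR : ContinuousOn Rr (Set.Ioo p q))
    (hsq : ∀ ζ ∈ Set.Ioo p q, Rr ζ ^ 2 = ((ζ : ℂ) - p) * ((ζ : ℂ) - q) * h ζ) :
    IntervalIntegrable (fun ζ => N ζ / Rr ζ) MeasureTheory.volume p q := by
  obtain ⟨m, hm, hm2⟩ : ∃ m > 0, ∀ ζ ∈ Set.Icc p q, m ≤ ‖h ζ‖ := by
    obtain ⟨ζ₀, h1, h2⟩ := isCompact_Icc.exists_isMinOn (Set.nonempty_Icc.2 hpq.le)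
      hh.norm.continuousOn
    exact ⟨‖h ζ₀‖, norm_pos_iff.2 (hh0 _ h1), fun ζ hζ => h2 hζ⟩
  obtain ⟨M, hM⟩ := isCompact_Icc.exists_bound_of_continuousOn (s := Set.Icc p q) hN.continuousOn
  have hM0 : 0 ≤ M := (norm_nonneg _).trans (hM p ⟨le_rfl, hpq.le⟩)
  have hRne : ∀ ζ ∈ Set.Ioo p q, Rr ζ ≠ 0 := by
    intro ζ hζ h0
    have := hsq ζ hζ
    rw [h0] at this
    have h1 : (ζ : ℂ) - p ≠ 0 := sub_ne_zero.2 (by exact_mod_cast hζ.1.ne')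
    have h2 : (ζ : ℂ) - q ≠ 0 := sub_ne_zero.2 (by exact_mod_cast hζ.2.ne)
    have h3 := hh0 ζ (Set.Ioo_subset_Icc_self hζ)
    exact (mul_ne_zero (mul_ne_zero h1 h2) h3) (by simpa using this.symm)
  have hb1 : IntervalIntegrable (fun ζ : ℝ => (ζ - p) ^ (-1/2 : ℝ)) MeasureTheory.volume p q := by
    have := (intervalIntegral.intervalIntegrable_rpow' (a := 0) (b := q - p)
      (r := (-1/2 : ℝ)) (by norm_num)).comp_sub_right p
    simpa using this
  have hb2 : IntervalIntegrable (fun ζ : ℝ => (q - ζ) ^ (-1/2 : ℝ)) MeasureTheory.volume p q := by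
    have := (intervalIntegral.intervalIntegrable_rpow' (a := q - p) (b := 0)
      (r := (-1/2 : ℝ)) (by norm_num)).comp_sub_left q
    simpa using this
  have hb := (hb1.add hb2).const_mul (M * (Real.sqrt (m * ((q - p) / 2)))⁻¹)
  rw [intervalIntegrable_iff_integrableOn_Ioo_of_le hpq.le] at hb ⊢
  refine MeasureTheory.Integrable.mono' hb ?_ ?_
  · exact (hN.continuousOn.div hR hRne).aestronglyMeasurable measurableSet_Ioo
  · refine (MeasureTheory.ae_restrict_iff' measurableSet_Ioo).2 (MeasureTheory.ae_of_all _ fun ζ hζ => ?_)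
    have hζ1 : 0 < ζ - p := by linarith [hζ.1]
    have hζ2 : 0 < q - ζ := by linarith [hζ.2]
    have hRn : ‖Rr ζ‖ ^ 2 = (ζ - p) * (q - ζ) * ‖h ζ‖ := by
      rw [← norm_pow, hsq ζ hζ, norm_mul, norm_mul, ← ofReal_sub, ← ofReal_sub, norm_real,
        norm_real, Real.norm_eq_abs, Real.norm_eq_abs, abs_of_pos hζ1,
        abs_of_neg (by linarith : ζ - q < 0)]
      ring
    have hmζ := hm2 ζ (Set.Ioo_subset_Icc_self hζ)
    have hpow : ∀ u : ℝ, 0 < u → u ^ (-1/2 : ℝ) = (Real.sqrt u)⁻¹ := by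
      intro u hu
      rw [show (-1/2 : ℝ) = -(1/2) by norm_num, Real.rpow_neg hu.le, ← Real.sqrt_eq_rpow]
    have key : ∀ u : ℝ, 0 < u → (m * ((q - p) / 2)) * u ≤ ‖Rr ζ‖ ^ 2 →
        ‖Rr ζ‖⁻¹ ≤ (Real.sqrt (m * ((q - p) / 2)))⁻¹ * u ^ (-1/2 : ℝ) := by
      intro u hu hle
      have hmm : 0 < m * ((q - p) / 2) := mul_pos hm (by linarith)
      rw [hpow u hu, ← mul_inv, ← Real.sqrt_mul hmm.le]
      apply inv_anti₀ (Real.sqrt_pos.2 (mul_pos hmm hu))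
      exact Real.sqrt_le_iff.2 ⟨norm_nonneg _, hle⟩
    have key2 : ‖Rr ζ‖⁻¹ ≤ (Real.sqrt (m * ((q - p) / 2)))⁻¹ *
        ((ζ - p) ^ (-1/2 : ℝ) + (q - ζ) ^ (-1/2 : ℝ)) := by
      have e1 : 0 ≤ (Real.sqrt (m * ((q - p) / 2)))⁻¹ * (ζ - p) ^ (-1/2 : ℝ) := by positivity
      have e2 : 0 ≤ (Real.sqrt (m * ((q - p) / 2)))⁻¹ * (q - ζ) ^ (-1/2 : ℝ) := by positivity
      rw [mul_add]
      rcases le_total ((q - p) / 2) (ζ - p) with hc | hc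
      · have := key (q - ζ) hζ2 (by
          rw [hRn]
          calc m * ((q - p) / 2) * (q - ζ) = ((q - p) / 2) * (q - ζ) * m := by ring
            _ ≤ (ζ - p) * (q - ζ) * ‖h ζ‖ := by gcongr)
        linarith
      · have := key (ζ - p) hζ1 (by
          rw [hRn]
          have : (q - p) / 2 ≤ q - ζ := by linarith
          calc m * ((q - p) / 2) * (ζ - p) = (ζ - p) * ((q - p) / 2) * m := by ring
            _ ≤ (ζ - p) * (q - ζ) * ‖h ζ‖ := by gcongr)
        linarith
    rw [norm_div, div_eq_mul_inv, mul_assoc]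
    exact mul_le_mul (hM ζ (Set.Ioo_subset_Icc_self hζ)) key2 (by positivity) hM0

/-- A branch of a square root on one side has a full one-sided limit. -/
lemma sqrt_side (R P : ℂ → ℂ) (S : Set ℂ) (hS : Convex ℝ S) (hR : ContinuousOn R S)
    (hP : Continuous P) (hsq : ∀ z ∈ S, R z ^ 2 = P z) (x₀ : ℂ) (hP0 : P x₀ ∈ slitPlane) :
    ∃ y, Tendsto R (nhdsWithin x₀ S) (nhds y) := by
  have hev : ∀ᶠ z in nhds x₀, P z ∈ slitPlane :=
    hP.continuousAt.eventually (isOpen_slitPlane.mem_nhds hP0)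
  obtain ⟨r, hr, hball⟩ := Metric.eventually_nhds_iff_ball.1 hev
  set s : ℂ → ℂ := fun z => P z ^ (1/2 : ℂ) with hs
  have hss : ∀ z, s z ^ 2 = P z := by
    intro z
    simp only [hs]
    rw [← Complex.cpow_nat_mul]
    norm_num
  have hscont : ∀ z ∈ Metric.ball x₀ r, ContinuousAt s z := fun z hz =>
    hP.continuousAt.cpow continuousAt_const (hball z hz)
  set T := S ∩ Metric.ball x₀ r with hT
  have hTconn : IsPreconnected T := (hS.inter (convex_ball x₀ r)).isPreconnected
  have hsx := (hscont x₀ (Metric.mem_ball_self hr)).tendsto.mono_left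
    (nhdsWithin_le_nhds (s := S))
  have hmem : T ∈ nhdsWithin x₀ S :=
    inter_mem_nhdsWithin _ (Metric.ball_mem_nhds x₀ hr)
  rcases hTconn.eq_or_eq_neg_of_sq_eq (f := R) (g := s) (hR.mono Set.inter_subset_left)
    (fun z hz => (hscont z hz.2).continuousWithinAt)
    (fun z hz => by simp only [Pi.pow_apply]; rw [hsq z hz.1, hss z])
    (fun {z} hz h0 => slitPlane_ne_zero (hball z hz.2) (by rw [← hss z, h0]; simp)) with h | h
  · refine ⟨_, hsx.congr' ?_⟩
    filter_upwards [hmem] with z hz using (h hz).symm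
  · refine ⟨_, hsx.neg.congr' ?_⟩
    filter_upwards [hmem] with z hz using (h hz).symm

/-- Vertical approach from above. -/
lemma vert_up (x₀ : ℝ) : Tendsto (fun ε : ℝ => (x₀ : ℂ) + ε * Complex.I)
    (nhdsWithin 0 (Set.Ioi 0)) (nhdsWithin (x₀ : ℂ) {z | 0 < z.im}) := by
  apply tendsto_nhdsWithin_of_tendsto_nhds_of_eventually_within
  · have : Continuous (fun ε : ℝ => (x₀ : ℂ) + ε * Complex.I) := by fun_prop
    simpa using (this.tendsto 0).mono_left (nhdsWithin_le_nhds (s := Set.Ioi 0))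
  · filter_upwards [self_mem_nhdsWithin] with z hz
    simpa using hz

/-- Vertical approach from below. -/
lemma vert_down (x₀ : ℝ) : Tendsto (fun ε : ℝ => (x₀ : ℂ) - ε * Complex.I)
    (nhdsWithin 0 (Set.Ioi 0)) (nhdsWithin (x₀ : ℂ) {z | z.im < 0}) := by
  apply tendsto_nhdsWithin_of_tendsto_nhds_of_eventually_within
  · have : Continuous (fun ε : ℝ => (x₀ : ℂ) - ε * Complex.I) := by fun_prop
    simpa using (this.tendsto 0).mono_left (nhdsWithin_le_nhds (s := Set.Ioi 0))
  · filter_upwards [self_mem_nhdsWithin] with z hz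
    simpa using hz

/-- Ordering of the endpoints. -/
lemma ord_ab (g : ℕ) (a b : ℕ → ℝ)
    (hord : ∀ j ∈ Finset.Icc 1 g, a j < b j ∧ b j < a (j + 1)) :
    (∀ i j, 1 ≤ i → i ≤ j → j ≤ g + 1 → a i ≤ a j) ∧
    (∀ i j, 1 ≤ i → i < j → j ≤ g → a (i + 1) < b j) ∧
    (∀ i j, 1 ≤ i → i ≤ j → j ≤ g → b i ≤ b j) := by
  have h1 : ∀ i j, 1 ≤ i → i ≤ j → j ≤ g + 1 → a i ≤ a j := by
    intro i j hi hij
    induction j, hij using Nat.le_induction with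
    | base => intro _; exact le_rfl
    | succ n hn ih =>
      intro hng
      have h := hord n (Finset.mem_Icc.2 ⟨by omega, by omega⟩)
      linarith [ih (by omega), h.1, h.2]
  have h2 : ∀ i j, 1 ≤ i → i < j → j ≤ g → a (i + 1) < b j := by
    intro i j hi hij hj
    have := h1 (i + 1) j (by omega) (by omega) (by omega)
    linarith [(hord j (Finset.mem_Icc.2 ⟨by omega, hj⟩)).1]
  refine ⟨h1, h2, ?_⟩
  intro i j hi hij hj
  rcases hij.eq_or_lt with rfl | h
  · exact le_rfl
  · have := h2 i j hi h hj
    linarith [(hord i (Finset.mem_Icc.2 ⟨hi, by omega⟩)).2]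

/-- In the band/gap setting with `α₁ = 0`, fix `x, t ∈ ℝ` and arbitrary real
constants `Ω₁, …, Ω_g`, and define
`G(λ) = (R(λ)/(2πi)) ∑_j ∫_{β_j}^{α_{j+1}} (Ω_j - 2θ⁺(ζ))/(R(ζ)(ζ - λ)) dζ`.
Then `G` is analytic on `ℂ ∖ [0, ∞)`; on the open bands and on `(α_{g+1}, ∞)` its boundary
values `G^±` exist continuously and satisfy `G⁺ + G⁻ = 0`; and on each open gap
`(β_j, α_{j+1})` they exist continuously and satisfy `G⁺ - G⁻ + 2θ⁺ = Ω_j`. -/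
theorem stmt_10
    (g : ℕ) (hg : 1 ≤ g) (a b : ℕ → ℝ)
    (ha1 : a 1 = 0)
    (hord : ∀ j ∈ Finset.Icc 1 g, a j < b j ∧ b j < a (j + 1))
    (P : ℂ → ℂ)
    (hP : ∀ z : ℂ, P z = (z - (a (g + 1) : ℂ)) *
      ∏ j ∈ Finset.Icc 1 g, ((z - (a j : ℂ)) * (z - (b j : ℂ))))
    (σB : Set ℝ)
    (hσB : σB = Set.Ici (a (g + 1)) ∪ ⋃ j ∈ Finset.Icc 1 g, Set.Icc (a j) (b j))
    (Ω : Set ℂ) (hΩ : Ω = {z : ℂ | ¬(z.im = 0 ∧ z.re ∈ σB)})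
    (R : ℂ → ℂ)
    (hRanal : DifferentiableOn ℂ R Ω)
    (hRsq : ∀ z ∈ Ω, R z ^ 2 = P z)
    (hRasym : Tendsto (fun x : ℝ => R (x : ℂ) / (((|x| ^ ((g : ℝ) + 1/2) : ℝ)) : ℂ))
      atBot (nhds ((-1 : ℂ) ^ g * Complex.I)))
    (hRgap : ∀ j ∈ Finset.Icc 1 g, ∀ x ∈ Set.Ioo (b j) (a (j + 1)),
      (R (x : ℂ)).re = 0 ∧ R (x : ℂ) ≠ 0)
    (hRband : ∀ x₀ : ℝ,
      ((∃ j ∈ Finset.Icc 1 g, x₀ ∈ Set.Ioo (a j) (b j)) ∨ a (g + 1) < x₀) →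
      ∃ Rp Rm : ℂ,
        Tendsto (fun ε : ℝ => R ((x₀ : ℂ) + ε * Complex.I))
          (nhdsWithin 0 (Set.Ioi 0)) (nhds Rp) ∧
        Tendsto (fun ε : ℝ => R ((x₀ : ℂ) - ε * Complex.I))
          (nhdsWithin 0 (Set.Ioi 0)) (nhds Rm) ∧
        Rp.im = 0 ∧ Rm.im = 0 ∧ Rp ≠ 0 ∧ Rp = -Rm)
    (x t : ℝ) (Ωv : ℕ → ℝ)
    (θp : ℝ → ℝ) (hθp : ∀ ζ : ℝ, θp ζ = Real.sqrt ζ * (x + 4 * ζ * t))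
    (G : ℂ → ℂ)
    (hG : ∀ z : ℂ, G z = (R z / (2 * Real.pi * Complex.I)) *
      ∑ j ∈ Finset.Icc 1 g,
        ∫ ζ in (b j)..(a (j + 1)),
          ((Ωv j : ℂ) - 2 * (θp ζ : ℂ)) / (R (ζ : ℂ) * ((ζ : ℂ) - z)))
    (bands gaps : Set ℝ)
    (hbands : bands = Set.Ioi (a (g + 1)) ∪ ⋃ j ∈ Finset.Icc 1 g, Set.Ioo (a j) (b j))
    (hgaps : gaps = ⋃ j ∈ Finset.Icc 1 g, Set.Ioo (b j) (a (j + 1))) :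
    DifferentiableOn ℂ G {z : ℂ | ¬(z.im = 0 ∧ 0 ≤ z.re)} ∧
    ∃ Gp Gm : ℝ → ℂ,
      ContinuousOn Gp (bands ∪ gaps) ∧ ContinuousOn Gm (bands ∪ gaps) ∧
      (∀ x₀ ∈ bands ∪ gaps,
        Tendsto (fun ε : ℝ => G ((x₀ : ℂ) + ε * Complex.I))
          (nhdsWithin 0 (Set.Ioi 0)) (nhds (Gp x₀)) ∧
        Tendsto (fun ε : ℝ => G ((x₀ : ℂ) - ε * Complex.I))
          (nhdsWithin 0 (Set.Ioi 0)) (nhds (Gm x₀))) ∧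
      (∀ x₀ ∈ bands, Gp x₀ + Gm x₀ = 0) ∧
      (∀ j ∈ Finset.Icc 1 g, ∀ x₀ ∈ Set.Ioo (b j) (a (j + 1)),
        Gp x₀ - Gm x₀ + 2 * (θp x₀ : ℂ) = (Ωv j : ℂ)) := by
  have hup : ∀ x₀ : ℝ, (x₀ : ℂ) ∈ closure {z : ℂ | 0 < z.im} := fun x₀ =>
    mem_closure_of_tendsto ((vert_up x₀).mono_right nhdsWithin_le_nhds)
      ((vert_up x₀).eventually self_mem_nhdsWithin)
  have hdn : ∀ x₀ : ℝ, (x₀ : ℂ) ∈ closure {z : ℂ | z.im < 0} := fun x₀ =>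
    mem_closure_of_tendsto ((vert_down x₀).mono_right nhdsWithin_le_nhds)
      ((vert_down x₀).eventually self_mem_nhdsWithin)
  obtain ⟨hmono, hab, hbb⟩ := ord_ab g a b hord
  -- positivity and disjointness facts
  have hbpos : ∀ j ∈ Finset.Icc 1 g, 0 < b j := by
    intro j hj
    have hj' := Finset.mem_Icc.1 hj
    have := hmono 1 j le_rfl hj'.1 (by omega)
    linarith [(hord j hj).1]
  have hgapdisj : ∀ j ∈ Finset.Icc 1 g, ∀ k ∈ Finset.Icc 1 g, k ≠ j →
      ∀ y ∈ Set.Icc (b j) (a (j + 1)), y ∉ Set.Icc (b k) (a (k + 1)) := by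
    intro j hj k hk hkj y hy hy'
    have hj' := Finset.mem_Icc.1 hj
    have hk' := Finset.mem_Icc.1 hk
    rcases lt_or_gt_of_ne hkj with h | h
    · linarith [hab k j hk'.1 h hj'.2, hy.1, hy'.2]
    · linarith [hab j k hj'.1 h hk'.2, hy.2, hy'.1]
  have hbanddisj : ∀ y ∈ σB, ∀ j ∈ Finset.Icc 1 g, y ∉ Set.Ioo (b j) (a (j + 1)) := by
    intro y hy j hj hyj
    have hj' := Finset.mem_Icc.1 hj
    rw [hσB] at hy
    rcases hy with hy | hy
    · have := hmono (j + 1) (g + 1) (by omega) (by omega) le_rfl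
      have hy : a (g + 1) ≤ y := hy
      linarith [hyj.2]
    · simp only [Set.mem_iUnion, exists_prop] at hy
      obtain ⟨k, hk, hyk⟩ := hy
      have hk' := Finset.mem_Icc.1 hk
      rcases le_or_gt k j with h | h
      · linarith [hbb k j hk'.1 h hj'.2, hyk.2, hyj.1]
      · linarith [hmono (j + 1) k (by omega) h (by omega), hyk.1, hyj.2]
  have hbandopen : ∀ y ∈ bands, ∀ j ∈ Finset.Icc 1 g, y ∉ Set.Icc (b j) (a (j + 1)) := by
    intro y hy j hj hyj
    have hj' := Finset.mem_Icc.1 hj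
    rw [hbands] at hy
    rcases hy with hy | hy
    · have := hmono (j + 1) (g + 1) (by omega) (by omega) le_rfl
      have hy : a (g + 1) < y := hy
      linarith [hyj.2]
    · simp only [Set.mem_iUnion, exists_prop] at hy
      obtain ⟨k, hk, hyk⟩ := hy
      have hk' := Finset.mem_Icc.1 hk
      rcases le_or_gt k j with h | h
      · linarith [hbb k j hk'.1 h hj'.2, hyk.2, hyj.1]
      · linarith [hmono (j + 1) k (by omega) h (by omega), hyk.1, hyj.2]
  have hσnn : ∀ y ∈ σB, 0 ≤ y := by
    intro y hy
    rw [hσB] at hy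
    rcases hy with hy | hy
    · have := hmono 1 (g + 1) le_rfl (by omega) le_rfl
      have hy : a (g + 1) ≤ y := hy
      linarith
    · simp only [Set.mem_iUnion, exists_prop] at hy
      obtain ⟨k, hk, hyk⟩ := hy
      have hk' := Finset.mem_Icc.1 hk
      linarith [hmono 1 k le_rfl hk'.1 (by omega), hyk.1]
  -- Ω is open and contains what it should
  have hσcl : IsClosed σB := by
    rw [hσB]
    exact isClosed_Ici.union (Set.Finite.isClosed_biUnion (Finset.finite_toSet _)
      fun j _ => isClosed_Icc)
  have hΩo : IsOpen Ω := by
    rw [hΩ]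
    have : {z : ℂ | ¬(z.im = 0 ∧ z.re ∈ σB)} = ({z : ℂ | z.im = 0} ∩ Complex.re ⁻¹' σB)ᶜ := rfl
    rw [this]
    exact ((isClosed_eq continuous_im continuous_const).inter
      (hσcl.preimage continuous_re)).isOpen_compl
  have hΩup : {z : ℂ | 0 < z.im} ⊆ Ω := by
    intro z hz
    rw [hΩ]
    exact fun h => (ne_of_gt hz) h.1
  have hΩdn : {z : ℂ | z.im < 0} ⊆ Ω := by
    intro z hz
    rw [hΩ]
    exact fun h => (ne_of_lt hz) h.1
  have hΩgap : ∀ j ∈ Finset.Icc 1 g, ∀ y ∈ Set.Ioo (b j) (a (j + 1)), (y : ℂ) ∈ Ω := by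
    intro j hj y hy
    rw [hΩ]
    intro h
    exact hbanddisj y (by simpa using h.2) j hj hy
  have hPc : Continuous P := by
    have : P = fun z : ℂ => (z - (a (g + 1) : ℂ)) *
      ∏ j ∈ Finset.Icc 1 g, ((z - (a j : ℂ)) * (z - (b j : ℂ))) := funext hP
    rw [this]
    fun_prop
  have hPalt : ∀ z : ℂ, P z = (z - (a 1 : ℂ)) *
      ∏ j ∈ Finset.Icc 1 g, ((z - (b j : ℂ)) * (z - (a (j + 1) : ℂ))) := by
    intro z
    rw [hP z, Finset.prod_mul_distrib, Finset.prod_mul_distrib]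
    have key : ∀ n : ℕ, (z - (a (n + 1) : ℂ)) * ∏ j ∈ Finset.Icc 1 n, (z - (a j : ℂ)) =
        (z - (a 1 : ℂ)) * ∏ j ∈ Finset.Icc 1 n, (z - (a (j + 1) : ℂ)) := by
      intro n
      induction n with
      | zero => simp
      | succ n ih =>
        rw [Finset.prod_Icc_succ_top (by omega), Finset.prod_Icc_succ_top (by omega)]
        linear_combination (z - (a (n + 1 + 1) : ℂ)) * ih
    linear_combination (∏ j ∈ Finset.Icc 1 g, (z - (b j : ℂ))) * key g
  have hθc : Continuous θp := by
    have : θp = fun ζ : ℝ => Real.sqrt ζ * (x + 4 * ζ * t) := funext hθp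
    rw [this]
    fun_prop
  have hRat : ∀ z ∈ Ω, DifferentiableAt ℂ R z := fun z hz =>
    hRanal.differentiableAt (hΩo.mem_nhds hz)
  set f : ℕ → ℝ → ℂ := fun j ζ => ((Ωv j : ℂ) - 2 * (θp ζ : ℂ)) / R (ζ : ℂ) with hf
  have hfint : ∀ j ∈ Finset.Icc 1 g,
      IntervalIntegrable (f j) MeasureTheory.volume (b j) (a (j + 1)) := by
    intro j hj
    refine dens_int (b j) (a (j + 1)) (hord j hj).2 (fun ζ => (Ωv j : ℂ) - 2 * (θp ζ : ℂ))
      (fun ζ => R (ζ : ℂ)) (fun ζ => ((ζ : ℂ) - (a 1 : ℂ)) *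
      ∏ k ∈ (Finset.Icc 1 g).erase j, (((ζ : ℂ) - (b k : ℂ)) * ((ζ : ℂ) - (a (k + 1) : ℂ))))
      (by fun_prop) (by fun_prop) ?_ ?_ ?_
    · intro ζ hζ
      apply mul_ne_zero
      · rw [sub_ne_zero]
        have := hbpos j hj
        have h2 : a 1 ≠ ζ := by
          rw [ha1]; exact (lt_of_lt_of_le this hζ.1).ne
        exact_mod_cast h2.symm
      · rw [Finset.prod_ne_zero_iff]
        intro k hk
        rw [Finset.mem_erase] at hk
        have hnot := hgapdisj j hj k hk.2 hk.1 ζ hζ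
        have hk2 := (hord k hk.2).2
        apply mul_ne_zero
        · rw [sub_ne_zero]
          intro h
          have h : ζ = b k := by exact_mod_cast h
          exact hnot ⟨h.ge, by linarith⟩
        · rw [sub_ne_zero]
          intro h
          have h : ζ = a (k + 1) := by exact_mod_cast h
          exact hnot ⟨by linarith, h.le⟩
    · intro ζ hζ
      apply ContinuousAt.continuousWithinAt
      exact ContinuousAt.comp (g := R) (f := fun ζ : ℝ => (ζ : ℂ))
        (hRat _ (hΩgap j hj ζ hζ)).continuousAt continuous_ofReal.continuousAt
    · intro ζ hζ
      rw [hRsq _ (hΩgap j hj ζ hζ), hPalt, ← Finset.mul_prod_erase _ _ hj]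
      ring
  set C : ℂ → ℂ := fun z => ∑ j ∈ Finset.Icc 1 g,
    ∫ ζ in (b j)..(a (j + 1)), f j ζ / ((ζ : ℂ) - z) with hC
  have hGC : G = fun z => (R z / (2 * Real.pi * Complex.I)) * C z := by
    funext z
    rw [hG z]
    simp only [hC, hf, div_div]
  have hCj : ∀ j ∈ Finset.Icc 1 g, ∀ z : ℂ, (∀ ζ ∈ Set.Icc (b j) (a (j + 1)), (ζ : ℂ) ≠ z) →
      DifferentiableAt ℂ (fun z => ∫ ζ in (b j)..(a (j + 1)), f j ζ / ((ζ : ℂ) - z)) z :=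
    fun j hj z hz => cauchy_diff _ _ (hord j hj).2.le _ (hfint j hj) z hz
  have hCd : ∀ z : ℂ, (∀ j ∈ Finset.Icc 1 g, ∀ ζ ∈ Set.Icc (b j) (a (j + 1)), (ζ : ℂ) ≠ z) →
      DifferentiableAt ℂ C z := by
    intro z hz
    exact DifferentiableAt.fun_sum fun j hj => hCj j hj z (hz j hj)
  -- bands
  have hband : ∀ x₀ ∈ bands, ∃ y : ℂ,
      Tendsto G (nhdsWithin (x₀ : ℂ) {z | 0 < z.im}) (nhds y) ∧
      Tendsto G (nhdsWithin (x₀ : ℂ) {z | z.im < 0}) (nhds (-y)) := by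
    intro x₀ hx₀
    have hx₀' : (∃ j ∈ Finset.Icc 1 g, x₀ ∈ Set.Ioo (a j) (b j)) ∨ a (g + 1) < x₀ := by
      rw [hbands] at hx₀
      rcases hx₀ with h | h
      · exact Or.inr h
      · left
        simpa only [Set.mem_iUnion, exists_prop] using h
    obtain ⟨Rp, Rm, h1, h2, h3, h4, h5, h6⟩ := hRband x₀ hx₀'
    have hPx : Rp ^ 2 = P x₀ := by
      have e1 := h1.pow 2
      have e2 : Tendsto (fun ε : ℝ => P ((x₀ : ℂ) + ε * Complex.I))
          (nhdsWithin 0 (Set.Ioi 0)) (nhds (P x₀)) :=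
        (hPc.tendsto (x₀ : ℂ)).comp ((vert_up x₀).mono_right nhdsWithin_le_nhds)
      refine tendsto_nhds_unique (e1.congr' ?_) e2
      filter_upwards [(vert_up x₀).eventually self_mem_nhdsWithin] with ε hε
      exact hRsq _ (hΩup hε)
    have hslit : P x₀ ∈ slitPlane := by
      left
      rw [← hPx]
      have hre : Rp.re ≠ 0 := fun h => h5 (Complex.ext h h3)
      rw [sq, mul_re, h3]
      have := mul_self_pos.2 hre
      linarith
    have hCx : Tendsto C (nhds (x₀ : ℂ)) (nhds (C x₀)) := by
      refine (hCd _ ?_).continuousAt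
      intro j hj ζ hζ h
      have h : ζ = x₀ := by exact_mod_cast h
      exact hbandopen x₀ hx₀ j hj (h ▸ hζ)
    obtain ⟨y1, hy1⟩ := sqrt_side R P {z | 0 < z.im} (convex_halfSpace_im_gt 0)
      (hRanal.continuousOn.mono hΩup) hPc (fun z hz => hRsq z (hΩup hz)) x₀ hslit
    obtain ⟨y2, hy2⟩ := sqrt_side R P {z | z.im < 0} (convex_halfSpace_im_lt 0)
      (hRanal.continuousOn.mono hΩdn) hPc (fun z hz => hRsq z (hΩdn hz)) x₀ hslit
    have e1 : y1 = Rp := tendsto_nhds_unique (hy1.comp (vert_up x₀)) h1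
    have e2 : y2 = Rm := tendsto_nhds_unique (hy2.comp (vert_down x₀)) h2
    have e3 : y2 = -y1 := by rw [e1, e2, h6, neg_neg]
    refine ⟨y1 / (2 * Real.pi * Complex.I) * C x₀, ?_, ?_⟩
    · rw [hGC]
      exact (hy1.div_const _).mul (hCx.mono_left nhdsWithin_le_nhds)
    · rw [hGC]
      have := (hy2.div_const (2 * Real.pi * Complex.I)).mul
        (hCx.mono_left (nhdsWithin_le_nhds (s := {z : ℂ | z.im < 0})))
      refine this.trans_eq ?_
      rw [e3]
      congr 1
      ring
  -- gaps
  have hgap : ∀ j ∈ Finset.Icc 1 g, ∀ x₀ ∈ Set.Ioo (b j) (a (j + 1)), ∃ y1 y2 : ℂ,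
      Tendsto G (nhdsWithin (x₀ : ℂ) {z | 0 < z.im}) (nhds y1) ∧
      Tendsto G (nhdsWithin (x₀ : ℂ) {z | z.im < 0}) (nhds y2) ∧
      y1 - y2 + 2 * (θp x₀ : ℂ) = (Ωv j : ℂ) := by
    intro j hj x₀ hx₀
    have hmem := hΩgap j hj x₀ hx₀
    have hx0pos : 0 < x₀ := (hbpos j hj).trans hx₀.1
    have hcd : ContDiffAt ℝ 1 (f j) x₀ := by
      have hRc : ContDiffAt ℝ 1 (fun ζ : ℝ => R (ζ : ℂ)) x₀ := by
        have h1 : ContDiffAt ℂ 1 R (x₀ : ℂ) :=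
          (hRanal.analyticAt (hΩo.mem_nhds hmem)).contDiffAt
        exact ContDiffAt.comp x₀ (g := R) (f := fun ζ : ℝ => (ζ : ℂ))
          (h1.restrict_scalars ℝ) ofRealCLM.contDiff.contDiffAt
      have hθd : ContDiffAt ℝ 1 θp x₀ := by
        have : θp = fun ζ : ℝ => Real.sqrt ζ * (x + 4 * ζ * t) := funext hθp
        rw [this]
        exact (contDiffAt_id.sqrt hx0pos.ne').mul
          (contDiffAt_const.add ((contDiffAt_const.mul contDiffAt_id).mul contDiffAt_const))
      have hθd' : ContDiffAt ℝ 1 (fun ζ : ℝ => (θp ζ : ℂ)) x₀ :=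
        ofRealCLM.contDiff.contDiffAt.comp x₀ hθd
      simp only [hf, div_eq_mul_inv]
      exact (contDiffAt_const.sub (contDiffAt_const.mul hθd')).mul
        (hRc.inv (hRgap j hj x₀ hx₀).2)
    obtain ⟨L, hL1, hL2⟩ := plemelj (b j) (a (j + 1)) x₀ hx₀.1 hx₀.2 (f j) (hfint j hj) hcd
    have hrest : Tendsto (fun z : ℂ => ∑ k ∈ (Finset.Icc 1 g).erase j,
        ∫ ζ in (b k)..(a (k + 1)), f k ζ / ((ζ : ℂ) - z)) (nhds (x₀ : ℂ))
        (nhds (∑ k ∈ (Finset.Icc 1 g).erase j,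
          ∫ ζ in (b k)..(a (k + 1)), f k ζ / ((ζ : ℂ) - x₀))) := by
      apply tendsto_finsetSum
      intro k hk
      rw [Finset.mem_erase] at hk
      refine (hCj k hk.2 (x₀ : ℂ) ?_).continuousAt
      intro ζ hζ h
      have h : ζ = x₀ := by exact_mod_cast h
      exact hgapdisj j hj k hk.2 hk.1 x₀ (Set.Ioo_subset_Icc_self hx₀) (h ▸ hζ)
    set M := ∑ k ∈ (Finset.Icc 1 g).erase j,
          ∫ ζ in (b k)..(a (k + 1)), f k ζ / ((ζ : ℂ) - x₀) with hM
    have hCs : C = fun z => (∫ ζ in (b j)..(a (j + 1)), f j ζ / ((ζ : ℂ) - z)) +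
        ∑ k ∈ (Finset.Icc 1 g).erase j,
          ∫ ζ in (b k)..(a (k + 1)), f k ζ / ((ζ : ℂ) - z) := by
      funext z
      exact (Finset.add_sum_erase _ _ hj).symm
    have hRc : Tendsto R (nhds (x₀ : ℂ)) (nhds (R x₀)) := (hRat _ hmem).continuousAt
    refine ⟨R x₀ / (2 * Real.pi * Complex.I) * (L + Real.pi * I * f j x₀ + M),
      R x₀ / (2 * Real.pi * Complex.I) * (L - Real.pi * I * f j x₀ + M), ?_, ?_, ?_⟩
    · rw [hGC, hCs]
      exact ((hRc.mono_left nhdsWithin_le_nhds).div_const _).mul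
        (hL1.add (hrest.mono_left nhdsWithin_le_nhds))
    · rw [hGC, hCs]
      exact ((hRc.mono_left nhdsWithin_le_nhds).div_const _).mul
        (hL2.add (hrest.mono_left nhdsWithin_le_nhds))
    · have hR0 := (hRgap j hj x₀ hx₀).2
      have hpi : (Real.pi : ℂ) ≠ 0 := by exact_mod_cast Real.pi_ne_zero
      simp only [hf]
      field_simp
      ring
  have hlim : ∀ x₀ ∈ bands ∪ gaps, ∃ y1 y2 : ℂ,
      Tendsto G (nhdsWithin (x₀ : ℂ) {z | 0 < z.im}) (nhds y1) ∧
      Tendsto G (nhdsWithin (x₀ : ℂ) {z | z.im < 0}) (nhds y2) := by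
    rintro x₀ (h | h)
    · obtain ⟨y, h1, h2⟩ := hband x₀ h
      exact ⟨_, _, h1, h2⟩
    · rw [hgaps] at h
      simp only [Set.mem_iUnion, exists_prop] at h
      obtain ⟨j, hj, hx⟩ := h
      obtain ⟨y1, y2, h1, h2, _⟩ := hgap j hj x₀ hx
      exact ⟨_, _, h1, h2⟩
  refine ⟨?_, fun y => extendFrom {z : ℂ | 0 < z.im} G (y : ℂ),
    fun y => extendFrom {z : ℂ | z.im < 0} G (y : ℂ), ?_, ?_, ?_, ?_, ?_⟩
  · intro z hz
    apply DifferentiableAt.differentiableWithinAt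
    rw [hGC]
    have hzΩ : z ∈ Ω := by
      rw [hΩ]
      exact fun h => hz ⟨h.1, hσnn _ h.2⟩
    refine ((hRat z hzΩ).div_const _).mul (hCd z ?_)
    intro j hj ζ hζ h
    apply hz
    rw [← h]
    exact ⟨by simp, by simpa using ((hbpos j hj).trans_le hζ.1).le⟩
  · have h1 : ContinuousOn (extendFrom {z : ℂ | 0 < z.im} G)
        ((fun y : ℝ => (y : ℂ)) '' (bands ∪ gaps)) := by
      apply continuousOn_extendFrom
      · rintro _ ⟨y, _, rfl⟩
        exact hup y
      · rintro _ ⟨y, hy, rfl⟩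
        obtain ⟨y1, y2, h1, h2⟩ := hlim y hy
        exact ⟨y1, h1⟩
    exact h1.comp continuous_ofReal.continuousOn (Set.mapsTo_image _ _)
  · have h1 : ContinuousOn (extendFrom {z : ℂ | z.im < 0} G)
        ((fun y : ℝ => (y : ℂ)) '' (bands ∪ gaps)) := by
      apply continuousOn_extendFrom
      · rintro _ ⟨y, _, rfl⟩
        exact hdn y
      · rintro _ ⟨y, hy, rfl⟩
        obtain ⟨y1, y2, h1, h2⟩ := hlim y hy
        exact ⟨y2, h2⟩
    exact h1.comp continuous_ofReal.continuousOn (Set.mapsTo_image _ _)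
  · intro x₀ hx₀
    obtain ⟨y1, y2, h1, h2⟩ := hlim x₀ hx₀
    simp only
    rw [extendFrom_eq (hup x₀) h1, extendFrom_eq (hdn x₀) h2]
    exact ⟨h1.comp (vert_up x₀), h2.comp (vert_down x₀)⟩
  · intro x₀ hx₀
    obtain ⟨y, h1, h2⟩ := hband x₀ hx₀
    simp only
    rw [extendFrom_eq (hup x₀) h1, extendFrom_eq (hdn x₀) h2, add_neg_cancel]
  · intro j hj x₀ hx₀
    obtain ⟨y1, y2, h1, h2, h3⟩ := hgap j hj x₀ hx₀
    simp only
    rw [extendFrom_eq (hup x₀) h1, extendFrom_eq (hdn x₀) h2, h3]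
end
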